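/- arXiv:1311.4676 — 3 statements merged into one kernel-verified Lean document; each statement's English description precedes it below -/
import Mathlib

section
/- Let K be a perfect field and F|K an algebraic function field in one variable, i.e., there exists x ∈ F transcendental over K such that F is a finite extension of K(x). Let S be a nonempty finite set of places of F|K, and let O_S be the ring of S-integers. Then for every positive integer N there exists an element r ∈ O_S such that r cannot be written as e_1 + ⋯ + e_k for any 1 ≤ k ≤ N and units e_1, …, e_k of O_S. -/
/-- A place of the function field `F` over `K`: a valuation subring of `F`
containing (the image of) `K` and different from `F`. -/
def IsPlace (K F : Type*) [Field K] [Field F] [Algebra K F]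
    (O : ValuationSubring F) : Prop :=
  (∀ c : K, algebraMap K F c ∈ O) ∧ (O : Set F) ≠ Set.univ

/-- `f` is an `S`-integer: `f` belongs to every place of `F | K` outside of `S`. -/
def SInteger (K F : Type*) [Field K] [Field F] [Algebra K F]
    (S : Finset (ValuationSubring F)) (f : F) : Prop :=
  ∀ O : ValuationSubring F, IsPlace K F O → O ∉ S → f ∈ O

/-!
Every place of `F | K` has a finitely generated value group, so up to constants algebraic over `K`
every unit of `O_S` is a product of integral powers of finitely many units `u₁, …, u_s`.

In characteristic `p`, put `q = p ^ N` and let `L` be generated over the algebraic closure of `K`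
in `F` by the `q`-th powers of `F`. Reducing exponents modulo `q` shows that the units lie on
finitely many lines of the `L`-vector space `F`, of which any `N` span a proper subspace because
`[F : L] ≥ q > N`. Since `L` is infinite, these finitely many subspaces do not cover `F`, and a
vector missed by all of them can be scaled by a `q`-th power to become an `S`-integer.

In characteristic `0`, let `D` be the derivation with `D z = 1` for a transcendental `S`-integer
`z`. The logarithmic derivative of a unit is an integral combination of the `D u_j / u_j`, so the
derivatives of a sum of `N` units are polynomials in `N (s + 1)` parameters. Hence all these sums
satisfy one algebraic differential equation of order at most `N (s + 1)`, whereas a suitable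
polynomial in `z` over `K` does not, its derivatives being prescribable by a triangular system.
-/

section TrivialValuation

open Polynomial

variable {K F Γ : Type*} [Field K] [Field F] [Algebra K F] [LinearOrderedCommGroupWithZero Γ]
  (v : Valuation F Γ)

theorem valuation_sum_ne_zero_of_dominant {ι : Type*} [Fintype ι] {t : ι → F} {i₀ : ι}
    (h₀ : t i₀ ≠ 0) (h : ∀ i ≠ i₀, v (t i) < v (t i₀)) : ∑ i, t i ≠ 0 := by
  classical
  rw [← v.ne_zero_iff, v.map_sum_eq_of_lt (Finset.mem_univ i₀) fun i hi => h i (by simpa using hi)]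
  exact v.ne_zero_iff.2 h₀

variable [v.IsTrivialOn K] {a : F}

theorem valuation_aeval_le_one (ha : v a ≤ 1) (p : K[X]) : v (aeval a p) ≤ 1 := by
  rw [aeval_eq_sum_range]
  refine v.map_sum_le fun i _ => ?_
  rw [Algebra.smul_def, map_mul, map_pow]
  exact mul_le_one' (Valuation.IsTrivialOn.valuation_algebraMap_le_one v _) (pow_le_one' ha i)

theorem valuation_aeval_eq_one (ha : v a < 1) {p : K[X]} (hp : p.coeff 0 ≠ 0) :
    v (aeval a p) = 1 := by
  have hsplit : aeval a p = a * aeval a p.divX + algebraMap K F (p.coeff 0) := by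
    conv_lhs => rw [← X_mul_divX_add p, map_add, map_mul, aeval_X, aeval_C]
  have hconst : v (algebraMap K F (p.coeff 0)) = 1 := Valuation.IsTrivialOn.eq_one _ hp
  rw [hsplit, v.map_add_eq_of_lt_right, hconst]
  rw [hconst, map_mul]
  exact mul_lt_one_of_lt_of_le ha (valuation_aeval_le_one v ha.le _)

theorem valuation_aeval_eq_pow_of_lt_one (ha : v a < 1) {p : K[X]} (hp : p ≠ 0) :
    v (aeval a p) = v a ^ p.natTrailingDegree := by
  have hfactor := p.pow_mul_divByMonic_rootMultiplicity_eq 0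
  have hcoeff := p.eval_divByMonic_pow_rootMultiplicity_ne_zero 0 hp
  simp only [map_zero, sub_zero, rootMultiplicity_eq_natTrailingDegree',
    ← coeff_zero_eq_eval_zero] at hfactor hcoeff
  conv_lhs => rw [← hfactor]
  rw [map_mul, map_mul, map_pow, aeval_X, valuation_aeval_eq_one v ha hcoeff, map_pow, mul_one]

theorem valuation_aeval_div_aeval_le_one (ha : 1 < v a) {p q : K[X]} (hq : q ≠ 0)
    (hpq : p.natDegree ≤ q.natDegree) : v (aeval a p / aeval a q) ≤ 1 := by
  by_cases hp : p = 0
  · simp [hp]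
  rw [map_div₀, valuation_aeval_eq_valuation_X_pow_natDegree_of_one_lt_valuation_X a ha hp,
    valuation_aeval_eq_valuation_X_pow_natDegree_of_one_lt_valuation_X a ha hq]
  exact div_le_one_of_le₀ (pow_le_pow_right₀ ha.le hpq) zero_le

theorem valuation_le_one_of_isIntegral_adjoin {f : F} (ha : v a ≤ 1)
    (hf : IsIntegral (Algebra.adjoin K {a}) f) : v f ≤ 1 := by
  have hadjoin : ∀ b : Algebra.adjoin K {a}, v b ≤ 1 := by
    rintro ⟨_, hb⟩
    obtain ⟨p, rfl⟩ := Algebra.adjoin_singleton_eq_range_aeval K a ▸ hb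
    exact valuation_aeval_le_one v ha p
  exact (Valuation.integer.integers v).mem_of_integral
    (hf.map_of_comp_eq ((algebraMap _ F).codRestrict v.integer hadjoin) (RingHom.id F) rfl)

end TrivialValuation

section RationalSubfield

open Polynomial IntermediateField

variable {K F : Type*} [Field K] [Field F] [Algebra K F] {a : F}

open scoped IntermediateField.algebraAdjoinAdjoin in
theorem exists_isIntegral_aeval_mul {b : F} (hb : IsAlgebraic K⟮a⟯ b) :
    ∃ p : K[X], aeval a p ≠ 0 ∧ IsIntegral (Algebra.adjoin K {a}) (aeval a p * b) := by
  obtain ⟨⟨_, hy⟩, hy₀, hint⟩ :=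
    ((IsFractionRing.isAlgebraic_iff (Algebra.adjoin K {a}) K⟮a⟯ F).2 hb).exists_integral_multiple
  obtain ⟨p, rfl⟩ := Algebra.adjoin_singleton_eq_range_aeval K a ▸ hy
  exact ⟨p, fun h => hy₀ (Subtype.ext h), hint⟩

open scoped IntermediateField.algebraAdjoinAdjoin in
theorem linearIndependent_adjoin_simple_of_sum_aeval_mul_ne_zero {ι : Type*} [Fintype ι]
    {f : ι → F} (h : ∀ p : ι → K[X], p ≠ 0 → ∑ i, aeval a (p i) * f i ≠ 0) :
    LinearIndependent K⟮a⟯ f := by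
  rw [← LinearIndependent.iff_fractionRing (Algebra.adjoin K {a}), Fintype.linearIndependent_iff]
  intro g hg
  have hpoly : ∀ i, ∃ p : K[X], aeval a p = (g i : F) := fun i =>
    (Algebra.adjoin_singleton_eq_range_aeval K a).le (g i).2
  choose p hp using hpoly
  have hp₀ : p = 0 := by
    by_contra hp₀
    exact h p hp₀ (by simpa only [hp] using! hg)
  exact fun i => Subtype.ext (by simp [← hp, hp₀])

section Valuation

variable {Γ : Type*} [LinearOrderedCommGroupWithZero Γ] (v : Valuation F Γ) [v.IsTrivialOn K]

theorem eventually_valuation_pow_mul_lt_one_of_isAlgebraic (ha : v a < 1) {b : F}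
    (hb : IsAlgebraic K⟮a⟯ b) : ∀ᶠ n in Filter.atTop, v (a ^ n * b) < 1 := by
  obtain ⟨p, hp, hint⟩ := exists_isIntegral_aeval_mul hb
  have hp₀ : p ≠ 0 := by rintro rfl; simp at hp
  have hle := valuation_le_one_of_isIntegral_adjoin v ha.le hint
  rw [map_mul, valuation_aeval_eq_pow_of_lt_one v ha hp₀] at hle
  filter_upwards [Filter.eventually_gt_atTop p.natTrailingDegree] with n hn
  obtain ⟨d, rfl⟩ := Nat.exists_eq_add_of_lt hn
  calc v (a ^ (p.natTrailingDegree + d + 1) * b)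
      = v a ^ (d + 1) * (v a ^ p.natTrailingDegree * v b) := by
        rw [map_mul, map_pow, add_assoc, pow_add, mul_comm (v a ^ _) (v a ^ _), mul_assoc]
    _ < 1 := mul_lt_one_of_lt_of_le (pow_lt_one₀ zero_le ha (Nat.succ_ne_zero d)) hle

theorem linearIndependent_adjoin_simple_of_valuation_pow_mul_ne {ι : Type*} [Finite ι] {f : ι → F}
    (ha₀ : a ≠ 0) (ha : v a < 1) (hf₀ : ∀ i, f i ≠ 0)
    (hf : ∀ i j, i ≠ j → ∀ m n : ℕ, v (a ^ m * f i) ≠ v (a ^ n * f j)) :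
    LinearIndependent K⟮a⟯ f := by
  cases nonempty_fintype ι
  refine linearIndependent_adjoin_simple_of_sum_aeval_mul_ne_zero fun p hp => ?_
  have htr : Transcendental K a := v.transcendental_of_ne_one K a ha₀ ha.ne
  obtain ⟨i₁, hi₁⟩ := Function.ne_iff.1 hp
  obtain ⟨i₀, -, hmax⟩ := Finset.exists_max_image Finset.univ
    (fun i => v (aeval a (p i) * f i)) ⟨i₁, Finset.mem_univ _⟩
  have hi₀ : aeval a (p i₀) * f i₀ ≠ 0 := by
    rw [← v.ne_zero_iff]
    refine (zero_lt_iff.2 ?_).trans_le (hmax i₁ (Finset.mem_univ _)) |>.ne'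
    exact v.ne_zero_iff.2 (mul_ne_zero (fun h => hi₁ (transcendental_iff.1 htr _ h)) (hf₀ i₁))
  have hvalue : ∀ i, p i ≠ 0 →
      v (aeval a (p i) * f i) = v (a ^ (p i).natTrailingDegree * f i) := fun i hi => by
    rw [map_mul, map_mul, map_pow, valuation_aeval_eq_pow_of_lt_one v ha hi]
  refine valuation_sum_ne_zero_of_dominant v hi₀ fun i hi => ?_
  refine lt_of_le_of_ne (hmax i (Finset.mem_univ _)) fun heq => ?_
  have hpi : ∀ {j}, aeval a (p j) * f j ≠ 0 → p j ≠ 0 := by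
    rintro j hj h
    simp [h] at hj
  have hpi' : aeval a (p i) * f i ≠ 0 := by rwa [← v.ne_zero_iff, heq, v.ne_zero_iff]
  rw [hvalue i (hpi hpi'), hvalue i₀ (hpi hi₀)] at heq
  exact hf i i₀ hi _ _ heq

end Valuation

theorem linearIndependent_adjoin_simple_of_valuations_separate {ι : Type*} [Finite ι]
    {Γ : ι → Type*} [∀ i, LinearOrderedCommGroupWithZero (Γ i)] (v : ∀ i, Valuation F (Γ i))
    [∀ i, (v i).IsTrivialOn K] {f : ι → F} (ha₀ : a ≠ 0) (ha : ∀ i, v i a < 1)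
    (hf : ∀ i, 1 < v i (f i)) (hf' : ∀ i j, i ≠ j → v i (f j) < 1) :
    LinearIndependent K⟮a⟯ f := by
  classical
  cases nonempty_fintype ι
  refine linearIndependent_adjoin_simple_of_sum_aeval_mul_ne_zero fun p hp => ?_
  obtain ⟨i₁, hi₁⟩ := Function.ne_iff.1 hp
  obtain ⟨i₀, hi₀, hmin⟩ := Finset.exists_min_image {i | p i ≠ 0}
    (fun i => (p i).natTrailingDegree) ⟨i₁, by simpa using hi₁⟩
  have hpi₀ : p i₀ ≠ 0 := by simpa using hi₀
  have hpos : 0 < v i₀ a ^ (p i₀).natTrailingDegree :=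
    zero_lt_iff.2 (pow_ne_zero _ ((v i₀).ne_zero_iff.2 ha₀))
  have hvalue : v i₀ (aeval a (p i₀) * f i₀) = v i₀ a ^ (p i₀).natTrailingDegree * v i₀ (f i₀) := by
    rw [map_mul, valuation_aeval_eq_pow_of_lt_one _ (ha i₀) hpi₀]
  have hvalue_pos : 0 < v i₀ (aeval a (p i₀) * f i₀) := by
    rw [hvalue]
    exact mul_pos hpos (zero_lt_one.trans (hf i₀))
  refine valuation_sum_ne_zero_of_dominant (v i₀) ((v i₀).ne_zero_iff.1 hvalue_pos.ne')
    fun i hi => ?_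
  by_cases hpi : p i = 0
  · simpa only [hpi, map_zero, zero_mul] using hvalue_pos
  calc v i₀ (aeval a (p i) * f i) = v i₀ a ^ (p i).natTrailingDegree * v i₀ (f i) := by
        rw [map_mul, valuation_aeval_eq_pow_of_lt_one _ (ha i₀) hpi]
    _ ≤ v i₀ a ^ (p i₀).natTrailingDegree * v i₀ (f i) := by
        gcongr ?_ * _
        exact pow_le_pow_of_le_one zero_le (ha i₀).le (hmin i (by simpa using hpi))
    _ < v i₀ a ^ (p i₀).natTrailingDegree * v i₀ (f i₀) :=
        mul_lt_mul_of_pos_left ((hf' i₀ i hi.symm).trans (hf i₀)) hpos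
    _ = v i₀ (aeval a (p i₀) * f i₀) := hvalue.symm

end RationalSubfield

/-- `F` is an algebraic function field in one variable over `K`: a finite extension of `K(x)` for
some `x` transcendental over `K`. Unlike Mathlib's `FunctionField`, no embedding of the field of
rational functions is part of the data. -/
class IsFunctionField (K F : Type*) [Field K] [Field F] [Algebra K F] : Prop where
  exists_transcendental_finiteDimensional (K F) :
    ∃ x : F, Transcendental K x ∧ FiniteDimensional (IntermediateField.adjoin K {x}) F

namespace IsFunctionField

open Polynomial IntermediateField

variable (K : Type*) {F : Type*} [Field K] [Field F] [Algebra K F] [IsFunctionField K F]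

open scoped IntermediateField.algebraAdjoinAdjoin in
theorem trdeg_le_one : Algebra.trdeg K F ≤ 1 := by
  obtain ⟨x, -, hfin⟩ := exists_transcendental_finiteDimensional K F
  have : Algebra.IsAlgebraic K⟮x⟯ F := Algebra.IsAlgebraic.of_finite _ _
  have : Algebra.IsAlgebraic (Algebra.adjoin K {x}) F := Algebra.IsAlgebraic.trans _ K⟮x⟯ F
  simpa using Algebra.IsAlgebraic.trdeg_le_cardinalMk K {x}

theorem essFiniteType : Algebra.EssFiniteType K F := by
  obtain ⟨x, -, hfin⟩ := exists_transcendental_finiteDimensional K F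
  have : Algebra.EssFiniteType K K⟮x⟯ := essFiniteType_iff.2 ⟨{x}, by simp⟩
  exact Algebra.EssFiniteType.comp K K⟮x⟯ F

variable {K}

theorem finiteDimensional_adjoin_simple {y : F} (hy : Transcendental K y) :
    FiniteDimensional K⟮y⟯ F := by
  have hindep : AlgebraicIndependent K (Subtype.val : ({y} : Set F) → F) :=
    algebraicIndependent_unique_type_iff.2 hy
  have hbasis := hindep.isTranscendenceBasis_of_trdeg_le_of_finite (by simpa using trdeg_le_one K)
  have hrange : Set.range (Subtype.val : ({y} : Set F) → F) = {y} := Subtype.range_coe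
  have : Algebra.IsAlgebraic K⟮y⟯ F := hrange ▸ hbasis.isAlgebraic_field
  have := essFiniteType K (F := F)
  have : Algebra.EssFiniteType K⟮y⟯ F := Algebra.EssFiniteType.of_comp K _ _
  exact Algebra.finite_of_essFiniteType_of_isAlgebraic

theorem eventually_valuation_pow_mul_lt_one {Γ : Type*} [LinearOrderedCommGroupWithZero Γ]
    (v : Valuation F Γ) [v.IsTrivialOn K] {a : F} (ha : v a < 1) (b : F) :
    ∀ᶠ n in Filter.atTop, v (a ^ n * b) < 1 := by
  by_cases ha₀ : a = 0
  · filter_upwards [Filter.eventually_ne_atTop 0] with n hn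
    simp [ha₀, hn]
  · have := finiteDimensional_adjoin_simple (v.transcendental_of_ne_one K a ha₀ ha.ne)
    exact eventually_valuation_pow_mul_lt_one_of_isAlgebraic (K := K) v ha
      (Algebra.IsAlgebraic.isAlgebraic b)

end IsFunctionField

section Places

open Polynomial IntermediateField Filter

variable {K F : Type*} [Field K] [Field F] [Algebra K F]

theorem one_lt_valuation_iff_notMem (O : ValuationSubring F) (f : F) :
    1 < O.valuation f ↔ f ∉ O := by
  rw [← O.valuation_le_one_iff, not_le]

theorem valuation_inv_lt_one_of_notMem {O : ValuationSubring F} {f : F} (hf : f ∉ O) :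
    O.valuation f⁻¹ < 1 := by
  rw [map_inv₀]
  exact inv_lt_one_of_one_lt₀ ((one_lt_valuation_iff_notMem O f).2 hf)

theorem valuation_div_one_add_of_one_lt {Γ : Type*} [LinearOrderedCommGroupWithZero Γ]
    (v : Valuation F Γ) {f : F} (hf : 1 < v f) : v (f / (1 + f)) = 1 := by
  rw [map_div₀, v.map_add_eq_of_lt_right (by rwa [map_one])]
  exact div_self (zero_lt_one.trans hf).ne'

theorem valuation_div_one_add_of_lt_one {Γ : Type*} [LinearOrderedCommGroupWithZero Γ]
    (v : Valuation F Γ) {f : F} (hf : v f < 1) : v (f / (1 + f)) = v f := by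
  rw [map_div₀, v.map_one_add_of_lt hf, div_one]

theorem ne_zero_of_notMem {O : ValuationSubring F} {f : F} (hf : f ∉ O) : f ≠ 0 := by
  rintro rfl
  exact hf O.zero_mem

namespace IsPlace

variable {O O₁ O₂ : ValuationSubring F}

theorem isTrivialOn (hO : IsPlace K F O) : O.valuation.IsTrivialOn K :=
  .of_le_one _ fun c => (O.valuation_le_one_iff _).2 (hO.1 c)

theorem exists_notMem (hO : IsPlace K F O) : ∃ f, f ∉ O :=
  (Set.ne_univ_iff_exists_notMem _).1 hO.2

theorem transcendental_of_notMem (hO : IsPlace K F O) {f : F} (hf : f ∉ O) :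
    Transcendental K f :=
  have := hO.isTrivialOn
  O.valuation.transcendental_of_ne_one K f (ne_zero_of_notMem hf)
    ((one_lt_valuation_iff_notMem O f).2 hf).ne'

theorem eq_of_le [IsFunctionField K F] (h₁ : IsPlace K F O₁) (h₂ : IsPlace K F O₂)
    (hle : O₁ ≤ O₂) : O₁ = O₂ := by
  refine le_antisymm hle fun b hb => ?_
  by_contra hb₁
  have := h₁.isTrivialOn
  obtain ⟨c, hc⟩ := h₂.exists_notMem
  obtain ⟨n, hn⟩ := (IsFunctionField.eventually_valuation_pow_mul_lt_one (K := K) O₁.valuation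
    (valuation_inv_lt_one_of_notMem hb₁) c).exists
  have hfactor : c = b ^ n * (b⁻¹ ^ n * c) := by
    rw [← mul_assoc, ← mul_pow, mul_inv_cancel₀ (ne_zero_of_notMem hb₁), one_pow, one_mul]
  rw [hfactor] at hc
  exact hc (mul_mem (pow_mem hb n) (hle ((O₁.valuation_le_one_iff _).1 hn.le)))

theorem exists_notMem_and_valuation_lt_one [IsFunctionField K F] (h₁ : IsPlace K F O₁)
    (h₂ : IsPlace K F O₂) (hne : O₁ ≠ O₂) : ∃ f ∉ O₁, O₂.valuation f < 1 := by
  obtain ⟨a, ha₂, ha₁⟩ := SetLike.not_le_iff_exists.1 fun hle => hne (eq_of_le h₂ h₁ hle).symm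
  obtain ⟨b, hb₁, hb₂⟩ := SetLike.not_le_iff_exists.1 fun hle => hne (eq_of_le h₁ h₂ hle)
  refine ⟨a * b⁻¹, fun hmem => ha₁ ?_, ?_⟩
  · simpa [ne_zero_of_notMem hb₂] using mul_mem hmem hb₁
  · rw [map_mul]
    exact mul_lt_one_of_nonneg_of_lt_one_right ((O₂.valuation_le_one_iff a).2 ha₂) zero_le
      (valuation_inv_lt_one_of_notMem hb₂)

theorem exists_notMem_and_forall_valuation_lt_one [IsFunctionField K F] (hO : IsPlace K F O)
    {T : Finset (ValuationSubring F)} (hT : ∀ O' ∈ T, IsPlace K F O') (hOT : O ∉ T) :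
    ∃ f ∉ O, ∀ O' ∈ T, O'.valuation f < 1 := by
  classical
  induction T using Finset.induction_on with
  | empty => simpa using hO.exists_notMem
  | insert O₁ T _ ih =>
    simp only [Finset.forall_mem_insert] at hT ⊢
    rw [Finset.mem_insert, not_or] at hOT
    obtain ⟨f, hfO, hfT⟩ := ih hT.2 hOT.2
    obtain ⟨g, hgO, hg₁⟩ := hO.exists_notMem_and_valuation_lt_one hT.1 hOT.1
    have hlarge : ∀ᶠ n in atTop, ∀ O' ∈ T, O'.valuation (f ^ n * g) < 1 := by
      refine (eventually_all_finset T).2 fun O' hO' => ?_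
      have := (hT.2 O' hO').isTrivialOn
      exact IsFunctionField.eventually_valuation_pow_mul_lt_one (K := K) _ (hfT O' hO') g
    obtain ⟨n, hn, hn₀⟩ := (hlarge.and (eventually_ne_atTop 0)).exists
    rw [← one_lt_valuation_iff_notMem] at hfO hgO
    have hfnO : 1 < O.valuation (f ^ n) := map_pow O.valuation f n ▸ one_lt_pow₀ hfO hn₀
    simp only [← one_lt_valuation_iff_notMem]
    -- A high power of `f` outweighs `g` everywhere except possibly at `O₁`; if `f` has a pole
    -- there, use `f ^ n / (1 + f ^ n)` instead, which is a unit at the poles of `f`.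
    by_cases hf₁ : f ∈ O₁
    · have hfn₁ : O₁.valuation (f ^ n) ≤ 1 := (O₁.valuation_le_one_iff _).2 (pow_mem hf₁ n)
      refine ⟨f ^ n * g, ?_, ?_, hn⟩ <;> rw [map_mul]
      · exact one_lt_mul_of_lt_of_le' hfnO hgO.le
      · exact mul_lt_one_of_nonneg_of_lt_one_right hfn₁ zero_le hg₁
    · have hfn₁ : 1 < O₁.valuation (f ^ n) :=
        map_pow O₁.valuation f n ▸ one_lt_pow₀ ((one_lt_valuation_iff_notMem O₁ f).2 hf₁) hn₀
      refine ⟨f ^ n / (1 + f ^ n) * g, ?_, ?_, fun O' hO' => ?_⟩ <;> rw [map_mul]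
      · rwa [valuation_div_one_add_of_one_lt _ hfnO, one_mul]
      · rwa [valuation_div_one_add_of_one_lt _ hfn₁, one_mul]
      · have hfn' : O'.valuation (f ^ n) < 1 :=
          map_pow O'.valuation f n ▸ pow_lt_one₀ zero_le (hfT O' hO') hn₀
        rw [valuation_div_one_add_of_lt_one _ hfn', ← map_mul]
        exact hn O' hO'

end IsPlace

theorem isAlgebraic_of_forall_isPlace_mem {f : F} (h : ∀ O, IsPlace K F O → f ∈ O) :
    IsAlgebraic K f := by
  by_contra hf
  have : IsIntegrallyClosedIn (integralClosure K F).toSubring F :=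
    inferInstanceAs (IsIntegrallyClosedIn (integralClosure K F) F)
  have hfK : f ∉ (integralClosure K F).toSubring := fun h => hf (IsIntegral.isAlgebraic h)
  obtain ⟨O, hO, hfO⟩ := Subring.exists_le_valuationSubring_of_isIntegrallyClosedIn hfK
  exact hfO (h O ⟨fun c => hO isIntegral_algebraMap,
    (Set.ne_univ_iff_exists_notMem _).2 ⟨f, hfO⟩⟩)

theorem IsFunctionField.finite_setOf_notMem [IsFunctionField K F] (y : F) :
    {O : ValuationSubring F | IsPlace K F O ∧ y ∉ O}.Finite := by
  classical
  by_contra hinf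
  rw [Set.not_finite] at hinf
  obtain ⟨O, hO, hyO⟩ := hinf.nonempty
  have htr : Transcendental K y⁻¹ := mt IsAlgebraic.inv_iff.1 (hO.transcendental_of_notMem hyO)
  have := finiteDimensional_adjoin_simple htr
  obtain ⟨T, hT, hcard⟩ := hinf.exists_subset_card_eq (Module.finrank K⟮y⁻¹⟯ F + 1)
  have happrox : ∀ O : T, ∃ f ∉ O.1, ∀ O' ∈ T.erase O.1, O'.valuation f < 1 := fun O =>
    (hT O.2).1.exists_notMem_and_forall_valuation_lt_one
      (fun O' hO' => (hT (Finset.mem_of_mem_erase hO')).1) (Finset.notMem_erase _ _)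
  choose f hf hf' using happrox
  have : ∀ O : T, O.1.valuation.IsTrivialOn K := fun O => (hT O.2).1.isTrivialOn
  have hindep : LinearIndependent K⟮y⁻¹⟯ f :=
    linearIndependent_adjoin_simple_of_valuations_separate (fun O : T => O.1.valuation)
      (inv_ne_zero (ne_zero_of_notMem hyO)) (fun O => valuation_inv_lt_one_of_notMem (hT O.2).2)
      (fun O => (one_lt_valuation_iff_notMem _ _).2 (hf O))
      fun O O' hne => hf' O' O (Finset.mem_erase.2 ⟨fun h => hne (Subtype.ext h), O.2⟩)
  have := hindep.fintype_card_le_finrank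
  simp [hcard] at this

end Places

section ValueGroup

open IntermediateField

variable {K F : Type*} [Field K] [Field F] [Algebra K F]

open scoped Submodule in
theorem finite_units_quotient_span_valuation {Γ : Type*} [LinearOrderedCommGroupWithZero Γ]
    {v : Valuation F Γ} [v.IsTrivialOn K] (hv : Function.Surjective v) {a : F}
    [FiniteDimensional K⟮a⟯ F] (ha₀ : v a ≠ 0) (ha : v a < 1) :
    Finite (Additive Γˣ ⧸ ℤ ∙ Additive.ofMul (Units.mk0 (v a) ha₀)) := by
  set Z := ℤ ∙ Additive.ofMul (Units.mk0 (v a) ha₀)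
  by_contra hinf
  rw [not_finite_iff_infinite] at hinf
  obtain ⟨T, hT⟩ := Infinite.exists_subset_card_eq (Additive Γˣ ⧸ Z) (Module.finrank K⟮a⟯ F + 1)
  have hlift : ∀ c : T, ∃ γ : Γˣ, Z.mkQ (Additive.ofMul γ) = c := fun c =>
    (Z.mkQ_surjective c).imp fun γ hγ => hγ
  choose γ hγ using hlift
  choose f hf using fun c => hv (γ c)
  have hf₀ : ∀ c, f c ≠ 0 := fun c => v.ne_zero_iff.1 (hf c ▸ (γ c).ne_zero)
  have hindep : LinearIndependent K⟮a⟯ f := by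
    refine linearIndependent_adjoin_simple_of_valuation_pow_mul_ne v (v.ne_zero_iff.1 ha₀) ha hf₀
      fun c d hcd m n heq => hcd (Subtype.ext ?_)
    rw [← hγ, ← hγ, Submodule.mkQ_apply, Submodule.mkQ_apply, Submodule.Quotient.eq,
      Submodule.mem_span_singleton]
    refine ⟨n - m, Additive.toMul.injective (Units.ext ?_)⟩
    simp only [map_mul, map_pow, hf] at heq
    simp only [toMul_zsmul, toMul_ofMul, toMul_sub, Units.val_zpow_eq_zpow_val, Units.val_mk0,
      Units.val_div_eq_div_val]
    rw [zpow_sub₀ ha₀, zpow_natCast, zpow_natCast,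
      div_eq_div_iff (pow_ne_zero m ha₀) (γ d).ne_zero, ← heq, mul_comm]
  have := hindep.fintype_card_le_finrank
  simp [hT] at this

theorem IsPlace.finite_valueGroup_units [IsFunctionField K F] {O : ValuationSubring F}
    (hO : IsPlace K F O) : Module.Finite ℤ (Additive O.ValueGroupˣ) := by
  obtain ⟨y, hy⟩ := hO.exists_notMem
  have := hO.isTrivialOn
  have htr : Transcendental K y⁻¹ := mt IsAlgebraic.inv_iff.1 (hO.transcendental_of_notMem hy)
  have := IsFunctionField.finiteDimensional_adjoin_simple htr
  have hv₀ : O.valuation y⁻¹ ≠ 0 := O.valuation.ne_zero_iff.2 (inv_ne_zero (ne_zero_of_notMem hy))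
  have := finite_units_quotient_span_valuation (K := K) O.valuation_surjective hv₀
    (valuation_inv_lt_one_of_notMem hy)
  exact Module.Finite.of_submodule_quotient
    (Submodule.span ℤ {Additive.ofMul (Units.mk0 (O.valuation y⁻¹) hv₀)})

end ValueGroup

section RegularFunctions

open Polynomial IntermediateField Filter

/-- The functions that are regular at all places belonging to `T`. Both the ring of `S`-integers
and the two charts `{y ∈ O}` and `{y ∉ O}` of the curve attached to a function `y` arise this
way. -/
def regularFunctions (K : Type*) {F : Type*} [Field K] [Field F] [Algebra K F]
    (T : Set (ValuationSubring F)) : Subalgebra K F where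
  carrier := {f | ∀ O, IsPlace K F O → O ∈ T → f ∈ O}
  mul_mem' hf hg O hO hT := mul_mem (hf O hO hT) (hg O hO hT)
  add_mem' hf hg O hO hT := add_mem (hf O hO hT) (hg O hO hT)
  algebraMap_mem' c _ hO _ := hO.1 c

variable {K F : Type*} [Field K] [Field F] [Algebra K F]

theorem mem_regularFunctions_of_isIntegral {T : Set (ValuationSubring F)} {a f : F}
    (ha : a ∈ regularFunctions K T) (hf : IsIntegral (Algebra.adjoin K {a}) f) :
    f ∈ regularFunctions K T := by
  intro O hO hT
  have := hO.isTrivialOn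
  rw [← O.valuation_le_one_iff]
  exact valuation_le_one_of_isIntegral_adjoin _ ((O.valuation_le_one_iff a).2 (ha O hO hT)) hf

theorem exists_eq_aeval_add_of_mem_adjoin_simple {y r : F} (hr : r ∈ K⟮y⟯) :
    ∃ p : K[X], ∃ s ∈ regularFunctions K {O | y ∉ O}, r = aeval y p + s := by
  obtain ⟨p, q, rfl⟩ := (mem_adjoin_simple_iff K r).1 hr
  by_cases hq : aeval y q = 0
  · exact ⟨0, 0, zero_mem _, by simp [hq]⟩
  have hq₀ : q ≠ 0 := by rintro rfl; simp at hq
  refine ⟨p / q, aeval y (p % q) / aeval y q, fun O hO hy => ?_, ?_⟩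
  · have := hO.isTrivialOn
    rw [← O.valuation_le_one_iff]
    exact valuation_aeval_div_aeval_le_one _ ((one_lt_valuation_iff_notMem O y).2 hy) hq₀
      (natDegree_le_natDegree (degree_mod_lt p hq₀).le)
  · rw [eq_comm, ← sub_eq_zero]
    have hdiv := congrArg (aeval y) (EuclideanDomain.div_add_mod p q)
    rw [map_add, map_mul] at hdiv
    rw [← hdiv]
    field_simp
    ring

theorem exists_regularFunctions_span_adjoin_simple_eq_top (y : F) [FiniteDimensional K⟮y⟯ F] :
    ∃ w : Fin (Module.finrank K⟮y⟯ F) → F, (∀ i, w i ∈ regularFunctions K {O | y ∈ O}) ∧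
      Submodule.span K⟮y⟯ (Set.range w) = ⊤ := by
  let b := Module.finBasis K⟮y⟯ F
  choose p hp hint using fun i => exists_isIntegral_aeval_mul (K := K) (a := y)
    (Algebra.IsAlgebraic.isAlgebraic (R := K⟮y⟯) (b i))
  refine ⟨fun i => aeval y (p i) * b i, fun i =>
    mem_regularFunctions_of_isIntegral (fun O _ hy => hy) (hint i), ?_⟩
  have hmem : ∀ i, aeval y (p i) ∈ K⟮y⟯ := fun i =>
    algebra_adjoin_le_adjoin K {y} (aeval_mem_adjoin_singleton K y)
  let c : Fin (Module.finrank K⟮y⟯ F) → K⟮y⟯ˣ := fun i =>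
    Units.mk0 ⟨aeval y (p i), hmem i⟩ fun h => hp i (congrArg Subtype.val h)
  exact (b.unitsSMul c).span_eq ▸ congrArg _ (congrArg _ (funext fun i =>
    (b.unitsSMul_apply (w := c) i).symm))

theorem eventually_inv_pow_mul_mem_regularFunctions [IsFunctionField K F] (y b : F) :
    ∀ᶠ n in atTop, y⁻¹ ^ n * b ∈ regularFunctions K {O | y ∉ O} := by
  have hpoles : ∀ᶠ n in atTop, ∀ O ∈ {O : ValuationSubring F | IsPlace K F O ∧ y ∉ O},
      O.valuation (y⁻¹ ^ n * b) < 1 := by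
    refine (IsFunctionField.finite_setOf_notMem (K := K) y).eventually_all.2 ?_
    rintro O ⟨hO, hy⟩
    have := hO.isTrivialOn
    exact IsFunctionField.eventually_valuation_pow_mul_lt_one (K := K) _
      (valuation_inv_lt_one_of_notMem hy) b
  filter_upwards [hpoles] with n hn O hO hy
  exact (O.valuation_le_one_iff _).1 (hn O ⟨hO, hy⟩).le

end RegularFunctions

section OnePole

open Polynomial IntermediateField Filter

theorem cofg_of_codisjoint_of_fg {R M : Type*} [Ring R] [AddCommGroup M] [Module R M]
    {N P : Submodule R M} (h : Codisjoint N P) (hP : P.FG) : N.CoFG := by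
  have hmap : P.map N.mkQ = ⊤ := by
    rw [← bot_sup_eq (P.map _), ← N.mkQ_map_self, ← Submodule.map_sup, h.eq_top,
      Submodule.map_top, N.range_mkQ]
  exact Module.finite_def.2 (hmap ▸ hP.map _)

variable {K F : Type*} [Field K] [Field F] [Algebra K F]

theorem aeval_mul_inv_pow_mul_mem {y w : F} (hy : y ≠ 0) {N : Submodule K F} {j : ℕ}
    (hw : ∀ d : ℕ, y ^ d * w ∈ N) (hw' : ∀ d ≤ j, y⁻¹ ^ d * w ∈ N) (p : K[X]) :
    aeval y p * (y⁻¹ ^ j * w) ∈ N := by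
  rw [aeval_eq_sum_range, Finset.sum_mul]
  refine N.sum_mem fun l _ => ?_
  rw [smul_mul_assoc]
  refine N.smul_mem _ ?_
  obtain ⟨d, rfl⟩ | ⟨d, rfl⟩ := (le_total j l).imp Nat.exists_eq_add_of_le Nat.exists_eq_add_of_le
  · convert hw d using 1
    rw [pow_add, inv_pow]
    field_simp
  · convert hw' d (Nat.le_add_left d l) using 1
    rw [pow_add, inv_pow, inv_pow]
    field_simp

/-- This is the finiteness of the first cohomology of the structure sheaf, computed with the cover
of the curve by the two charts `{y ∈ O}` and `{y ∉ O}`. -/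
theorem cofg_regularFunctions_sup [IsFunctionField K F] {y : F} (hy : Transcendental K y) :
    ((regularFunctions K {O | y ∈ O}).toSubmodule ⊔
      (regularFunctions K {O | y ∉ O}).toSubmodule).CoFG := by
  have := IsFunctionField.finiteDimensional_adjoin_simple hy
  have hy₀ : y ≠ 0 := by rintro rfl; exact hy isAlgebraic_zero
  obtain ⟨w, hw, hspan⟩ := exists_regularFunctions_span_adjoin_simple_eq_top (K := K) y
  obtain ⟨j, hj⟩ := (eventually_all.2 fun i =>
    eventually_inv_pow_mul_mem_regularFunctions (K := K) y (w i)).exists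
  set U := (regularFunctions K {O | y ∈ O}).toSubmodule
  set V := (regularFunctions K {O | y ∉ O}).toSubmodule
  let s : Set F := Set.range fun t : Fin (j + 1) × _ => y⁻¹ ^ (t.1 : ℕ) * w t.2
  refine cofg_of_codisjoint_of_fg (P := Submodule.span K s) (codisjoint_iff.2 ?_)
    (Submodule.fg_span (Set.finite_range _))
  set N := U ⊔ V ⊔ Submodule.span K s
  have hterm : ∀ r ∈ K⟮y⟯, ∀ i, r * w i ∈ N := by
    intro r hr i
    have hyr : r * y ^ j ∈ K⟮y⟯ := mul_mem hr (pow_mem (mem_adjoin_simple_self K y) j)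
    obtain ⟨p, t, ht, hpt⟩ := exists_eq_aeval_add_of_mem_adjoin_simple hyr
    have hsplit : r * w i = aeval y p * (y⁻¹ ^ j * w i) + t * (y⁻¹ ^ j * w i) := by
      rw [← add_mul, ← hpt, inv_pow]
      field_simp
    rw [hsplit]
    refine N.add_mem (aeval_mul_inv_pow_mul_mem hy₀ (fun d => ?_) (fun d hd => ?_) p) ?_
    · exact Submodule.mem_sup_left (Submodule.mem_sup_left
        (Subalgebra.mul_mem _ (Subalgebra.pow_mem _ (fun O _ hO => hO) d) (hw i)))
    · exact Submodule.mem_sup_right (Submodule.subset_span ⟨(⟨d, by omega⟩, i), rfl⟩)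
    · exact Submodule.mem_sup_left (Submodule.mem_sup_right
        (Subalgebra.mul_mem _ ht (hj i)))
  rw [eq_top_iff]
  rintro g -
  obtain ⟨c, rfl⟩ := (Submodule.mem_span_range_iff_exists_fun K⟮y⟯).1
    (hspan ▸ Submodule.mem_top (x := g))
  exact N.sum_mem fun i _ => hterm _ (c i).2 i

theorem exists_aeval_X_mul_mem_of_cofg {N : Submodule K F} (hN : N.CoFG) (f : F) :
    ∃ p : K[X], p ≠ 0 ∧ aeval f (X * p) ∈ N := by
  let φ : K[X] →ₗ[K] F ⧸ N := N.mkQ ∘ₗ (aeval f).toLinearMap ∘ₗ LinearMap.mulLeft K X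
  have hφ : φ.ker ≠ ⊥ := fun hker =>
    have : Module.Finite K (F ⧸ N) := hN
    Polynomial.not_finite (Module.Finite.of_injective φ (LinearMap.ker_eq_bot.1 hker))
  obtain ⟨p, hp, hp₀⟩ := Submodule.exists_mem_ne_zero_of_ne_bot hφ
  exact ⟨p, hp₀, by simpa [φ] using hp⟩

theorem IsPlace.exists_notMem_and_forall_ne_mem [IsFunctionField K F] {O : ValuationSubring F}
    (hO : IsPlace K F O) : ∃ z ∉ O, ∀ O', IsPlace K F O' → O' ≠ O → z ∈ O' := by
  classical
  obtain ⟨y, hy⟩ := hO.exists_notMem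
  have hpoles := IsFunctionField.finite_setOf_notMem (K := K) y
  obtain ⟨f, hfO, hf⟩ := hO.exists_notMem_and_forall_valuation_lt_one
    (T := hpoles.toFinset.erase O) (by simp +contextual) (Finset.notMem_erase _ _)
  -- Among the poles of `y`, only `O` is a pole of `f`. Splitting a polynomial in `f` into a
  -- function `z` without poles off those of `y` and a function `b` regular at all poles of `y`
  -- leaves `O` as the only pole of `z`.
  obtain ⟨p, hp, hmem⟩ := exists_aeval_X_mul_mem_of_cofg
    (cofg_regularFunctions_sup (hO.transcendental_of_notMem hy)) f
  obtain ⟨z, hz, b, hb, hzb⟩ := Submodule.mem_sup.1 hmem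
  refine ⟨z, fun hzO => ?_, fun O' hO' hne => ?_⟩
  · have := hO.isTrivialOn
    rw [← one_lt_valuation_iff_notMem] at hfO
    have hlt : 1 < O.valuation (aeval f (X * p)) := by
      rw [valuation_aeval_eq_valuation_X_pow_natDegree_of_one_lt_valuation_X f hfO
        (mul_ne_zero X_ne_zero hp), natDegree_X_mul hp]
      exact one_lt_pow₀ hfO (Nat.succ_ne_zero _)
    exact (one_lt_valuation_iff_notMem O _).1 hlt (hzb ▸ add_mem hzO (hb O hO hy))
  · by_cases hy' : y ∈ O'
    · exact hz O' hO' hy'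
    · have := hO'.isTrivialOn
      have hfO' : O'.valuation f ≤ 1 := (hf O' (by simp [hne, hO', hy'])).le
      rw [eq_sub_of_add_eq hzb]
      exact sub_mem ((O'.valuation_le_one_iff _).1 (valuation_aeval_le_one _ hfO' _))
        (hb O' hO' hy')

end OnePole

section SUnits

open Polynomial IntermediateField

theorem exists_fin_forall_sub_sum_smul_mem_ker {R M N : Type*} [Ring R] [AddCommGroup M]
    [AddCommGroup N] [Module R M] [Module R N] [IsNoetherian R N] (f : M →ₗ[R] N) :
    ∃ (s : ℕ) (u : Fin s → M), ∀ x, ∃ a : Fin s → R, x - ∑ j, a j • u j ∈ f.ker := by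
  obtain ⟨s, g, hg⟩ :=
    Submodule.fg_iff_exists_fin_generating_family.1 (IsNoetherian.noetherian f.range)
  have hlift : ∀ j, ∃ u, f u = g j := fun j => by
    rw [← LinearMap.mem_range, ← hg]
    exact Submodule.subset_span ⟨j, rfl⟩
  choose u hu using hlift
  refine ⟨s, u, fun x => ?_⟩
  obtain ⟨a, ha⟩ :=
    (Submodule.mem_span_range_iff_exists_fun R).1 (hg ▸ LinearMap.mem_range_self f x)
  exact ⟨a, by simp [hu, ha]⟩

variable {K F : Type*} [Field K] [Field F] [Algebra K F] {S : Finset (ValuationSubring F)}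

theorem sInteger_iff_mem_regularFunctions {f : F} :
    SInteger K F S f ↔ f ∈ regularFunctions K (↑S)ᶜ :=
  Iff.rfl

/-- The group of units of the ring of `S`-integers, as a subgroup of `Fˣ`. -/
def sUnits (K : Type*) {F : Type*} [Field K] [Field F] [Algebra K F]
    (S : Finset (ValuationSubring F)) : Subgroup Fˣ :=
  (regularFunctions K (↑S)ᶜ).toSubmonoid.units

theorem SInteger.exists_mem_sUnits {e e' : F} (he : SInteger K F S e) (he' : SInteger K F S e')
    (hee' : e * e' = 1) : ∃ u ∈ sUnits K S, (u : F) = e :=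
  ⟨⟨e, e', hee', mul_comm e e' ▸ hee'⟩, Submonoid.mem_units_iff _ _ |>.2 ⟨he, he'⟩, rfl⟩

theorem isAlgebraic_of_mem_sUnits_of_forall_valuation_eq_one {u : Fˣ}
    (hu : u ∈ sUnits K S) (h : ∀ O ∈ S, O.valuation (u : F) = 1) : IsAlgebraic K (u : F) := by
  refine isAlgebraic_of_forall_isPlace_mem fun O hO => ?_
  by_cases hOS : O ∈ S
  · exact (O.valuation_le_one_iff _).1 (h O hOS).le
  · exact ((Submonoid.mem_units_iff _ _).1 hu).1 O hO hOS

variable [IsFunctionField K F]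

theorem exists_sUnits_eq_isAlgebraic_mul_prod_zpow (hS : ∀ O ∈ S, IsPlace K F O) :
    ∃ (s : ℕ) (u : Fin s → Fˣ), ∀ e ∈ sUnits K S, ∃ c : F, IsAlgebraic K c ∧
      ∃ a : Fin s → ℤ, (e : F) = c * ∏ j, (u j : F) ^ a j := by
  have := fun O : S => (hS O O.2).finite_valueGroup_units
  let ψ : Additive (sUnits K S) →ₗ[ℤ] (∀ O : S, Additive O.1.ValueGroupˣ) :=
    LinearMap.pi fun O => (MonoidHom.toAdditive
      ((Units.map (O.1.valuation : F →* O.1.ValueGroup)).comp (sUnits K S).subtype)).toIntLinearMap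
  obtain ⟨s, u, hu⟩ := exists_fin_forall_sub_sum_smul_mem_ker ψ
  refine ⟨s, fun j => (u j).toMul, fun e he => ?_⟩
  obtain ⟨a, ha⟩ := hu (Additive.ofMul ⟨e, he⟩)
  set c := Additive.ofMul ⟨e, he⟩ - ∑ j, a j • u j with hc
  refine ⟨(c.toMul : Fˣ), isAlgebraic_of_mem_sUnits_of_forall_valuation_eq_one c.toMul.2
    fun O hO => congrArg (fun γ => ((Additive.toMul γ : O.ValueGroupˣ) : O.ValueGroup))
      (congrFun ha ⟨O, hO⟩), a, ?_⟩
  have hprod := congrArg (fun t : Additive (sUnits K S) => ((t.toMul : Fˣ) : F))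
    (sub_eq_iff_eq_add.1 hc.symm)
  simpa using hprod

theorem exists_transcendental_sInteger (hS : ∀ O ∈ S, IsPlace K F O) (hSne : S.Nonempty) :
    ∃ z, Transcendental K z ∧ SInteger K F S z := by
  obtain ⟨O, hO⟩ := hSne
  obtain ⟨z, hzO, hz⟩ := (hS O hO).exists_notMem_and_forall_ne_mem
  exact ⟨z, (hS O hO).transcendental_of_notMem hzO,
    fun O' hO' hO'S => hz O' hO' fun h => hO'S (h ▸ hO)⟩

theorem exists_ne_zero_sInteger_mul (hS : ∀ O ∈ S, IsPlace K F O) (hSne : S.Nonempty) (f : F) :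
    ∃ h ≠ 0, SInteger K F S h ∧ SInteger K F S (h * f) := by
  obtain ⟨z, hz, hzS⟩ := exists_transcendental_sInteger hS hSne
  rw [sInteger_iff_mem_regularFunctions] at hzS
  have := IsFunctionField.finiteDimensional_adjoin_simple hz
  obtain ⟨p, hp, hint⟩ :=
    exists_isIntegral_aeval_mul (Algebra.IsAlgebraic.isAlgebraic (R := K⟮z⟯) f)
  have hle : Algebra.adjoin K {z} ≤ regularFunctions K (↑S)ᶜ :=
    Algebra.adjoin_le (Set.singleton_subset_iff.2 hzS)
  exact ⟨aeval z p, hp, hle (aeval_mem_adjoin_singleton K z),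
    mem_regularFunctions_of_isIntegral hzS hint⟩

end SUnits

section PowerSubfield

open Polynomial IntermediateField Module

theorem exists_forall_notMem_span_of_lt_finrank {k E : Type*} [Field k] [Infinite k]
    [AddCommGroup E] [Module k E] {N : ℕ} (hN : N < finrank k E) (B : Finset E) :
    ∃ f : E, ∀ T ⊆ B, T.card ≤ N → f ∉ Submodule.span k (T : Set E) := by
  by_contra! hcover
  let p (T : {T ∈ B.powerset | T.card ≤ N}) := Submodule.span k (T.1 : Set E)
  obtain ⟨T, hT⟩ := Subspace.exists_eq_top_of_iUnion_eq_univ (p := p) <| Set.eq_univ_of_forall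
    fun f => by
      obtain ⟨T, hTB, hTN, hf⟩ := hcover f
      exact Set.mem_iUnion.2 ⟨⟨T, Finset.mem_filter.2 ⟨Finset.mem_powerset.2 hTB, hTN⟩⟩, hf⟩
  have hcard := finrank_span_finset_le_card (R := k) T.1
  rw [Set.finrank, show Submodule.span k (T.1 : Set E) = ⊤ from hT, finrank_top] at hcard
  have := (Finset.mem_filter.1 T.2).2
  omega

theorem exists_forall_smul_ne_sum_smul_of_lt_finrank {k E : Type*} [Field k] [Infinite k]
    [AddCommGroup E] [Module k E] {N : ℕ} (hN : N < finrank k E) (B : Finset E) :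
    ∃ f : E, ∀ a : k, a ≠ 0 → ∀ n ≤ N, ∀ (c : Fin n → k) (b : Fin n → E), (∀ i, b i ∈ B) →
      a • f ≠ ∑ i, c i • b i := by
  classical
  obtain ⟨f, hf⟩ := exists_forall_notMem_span_of_lt_finrank hN B
  refine ⟨f, fun a ha n hn c b hb heq => hf (Finset.univ.image b)
    (Finset.image_subset_iff.2 fun i _ => hb i) (Finset.card_image_le.trans (by simpa using hn))
    ((Submodule.smul_mem_iff _ ha).1 ?_)⟩
  rw [heq]
  exact Submodule.sum_mem _ fun i _ => Submodule.smul_mem _ _ (Submodule.subset_span (by simp))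

theorem finrank_adjoin_range_pow_le {A B F : Type*} [Field A] [Field B] [Field F] [Algebra A F]
    [Algebra B F] [FiniteDimensional A F] [Algebra.IsAlgebraic B F] (p t : ℕ) [ExpChar F p]
    (h : ∀ a, algebraMap A F a ^ p ^ t ∈ Set.range (algebraMap B F)) :
    finrank B (adjoin B (Set.range fun f : F => f ^ p ^ t)) ≤ finrank A F := by
  let b := finBasis A F
  have hsub : Set.range (fun f : F => f ^ p ^ t) ⊆
      Submodule.span B (Set.range fun i => b i ^ p ^ t) := by
    rintro _ ⟨f, rfl⟩
    beta_reduce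
    rw [← b.sum_repr f, SetLike.mem_coe, sum_pow_char_pow]
    refine Submodule.sum_mem _ fun i _ => ?_
    obtain ⟨c, hc⟩ := h (b.repr f i)
    rw [Algebra.smul_def, mul_pow, ← hc, ← Algebra.smul_def]
    exact Submodule.smul_mem _ c (Submodule.subset_span ⟨i, rfl⟩)
  have hclosure : (Submonoid.closure (Set.range fun f : F => f ^ p ^ t) : Set F) =
      Set.range fun f : F => f ^ p ^ t :=
    congrArg SetLike.coe (MonoidHom.mrange (powMonoidHom (α := F) (p ^ t))).closure_eq
  have hle : (adjoin B (Set.range fun f : F => f ^ p ^ t)).toSubalgebra.toSubmodule ≤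
      Submodule.span B (Set.range fun i => b i ^ p ^ t) := by
    rw [adjoin_toSubalgebra, Algebra.adjoin_eq_span, hclosure]
    exact Submodule.span_le.2 hsub
  calc finrank B (adjoin B (Set.range fun f : F => f ^ p ^ t))
      ≤ finrank B (Submodule.span B (Set.range fun i => b i ^ p ^ t)) :=
        have := FiniteDimensional.span_of_finite B (Set.finite_range fun i => b i ^ p ^ t)
        Submodule.finrank_mono hle
    _ ≤ finrank A F := (finrank_range_le_card _).trans (Fintype.card_fin _).le

theorem linearIndependent_adjoin_simple_pow {K F : Type*} [Field K] [Field F] [Algebra K F]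
    {x : F} (hx : Transcendental K x) {q : ℕ} (hq : 0 < q) :
    LinearIndependent K⟮x ^ q⟯ fun i : Fin q => x ^ (i : ℕ) := by
  refine linearIndependent_adjoin_simple_of_sum_aeval_mul_ne_zero fun p hp h₀ => hp ?_
  have hsum : aeval x (∑ i, expand K q (p i) * X ^ (i : ℕ)) = 0 := by
    simpa [expand_aeval] using h₀
  have hzero := transcendental_iff.1 hx _ hsum
  ext i m
  have hcoeff := congrArg (coeff · (m * q + i)) hzero
  rw [finsetSum_coeff, Finset.sum_eq_single i] at hcoeff
  · simpa [coeff_mul_X_pow, coeff_expand_mul hq] using hcoeff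
  · intro j _ hji
    rw [coeff_mul_X_pow', coeff_expand hq]
    split_ifs with hle hdvd
    · have hmod : (j : ℕ) ≡ i [MOD q] := by
        simpa [Nat.ModEq] using (Nat.modEq_iff_dvd' hle).2 hdvd
      exact absurd (Fin.ext (hmod.eq_of_lt_of_lt j.2 i.2)) hji
    all_goals rfl
  · simp

theorem pow_mem_adjoin_simple_pow {K F : Type*} [Field K] [Field F] [Algebra K F] (p t : ℕ)
    [ExpChar F p] {x a : F} (ha : a ∈ K⟮x⟯) : a ^ p ^ t ∈ K⟮x ^ p ^ t⟯ := by
  induction ha using adjoin_induction with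
  | mem y hy => exact hy ▸ mem_adjoin_simple_self K _
  | algebraMap c => exact pow_mem (IntermediateField.algebraMap_mem _ c) _
  | add a b _ _ ha hb => exact add_pow_expChar_pow a b p t ▸ add_mem ha hb
  | inv a _ ha => exact inv_pow a (p ^ t) ▸ inv_mem ha
  | mul a b _ _ ha hb => exact mul_pow a b (p ^ t) ▸ mul_mem ha hb

theorem le_relfinrank_adjoin_simple_pow {K F : Type*} [Field K] [Field F] [Algebra K F] {x : F}
    (hx : Transcendental K x) {q : ℕ} (hq : 0 < q) [FiniteDimensional K⟮x ^ q⟯ F] :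
    q ≤ relfinrank K⟮x ^ q⟯ K⟮x⟯ := by
  have hle : K⟮x ^ q⟯ ≤ K⟮x⟯ :=
    adjoin_simple_le_iff.2 (pow_mem (mem_adjoin_simple_self K x) q)
  let v (i : Fin q) : extendScalars hle := ⟨x ^ (i : ℕ), pow_mem (mem_adjoin_simple_self K x) _⟩
  have hv : LinearIndependent K⟮x ^ q⟯ v :=
    .of_comp (extendScalars hle).val.toLinearMap (linearIndependent_adjoin_simple_pow hx hq)
  rw [relfinrank_eq_finrank_of_le hle]
  simpa using hv.fintype_card_le_finrank

theorem IsFunctionField.infinite (K F : Type*) [Field K] [Field F] [Algebra K F]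
    [IsFunctionField K F] : Infinite F := by
  obtain ⟨x, hx, -⟩ := exists_transcendental_finiteDimensional K F
  exact Infinite.of_injective _ (transcendental_iff_injective.1 hx)

variable (K : Type*) {F : Type*} [Field K] [Field F] [Algebra K F] [IsFunctionField K F]

theorem IsFunctionField.pow_le_finrank_adjoin_range_pow (p t : ℕ) [ExpChar F p] :
    p ^ t ≤ finrank (adjoin K (Set.range fun f : F => f ^ p ^ t)) F := by
  obtain ⟨x, hx, hfin⟩ := exists_transcendental_finiteDimensional K F
  have hq : 0 < p ^ t := expChar_pow_pos F p t
  have := finiteDimensional_adjoin_simple (hx.pow hq)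
  set E := K⟮x ^ p ^ t⟯
  set L := adjoin K (Set.range fun f : F => f ^ p ^ t)
  have hEx : E ≤ K⟮x⟯ := adjoin_simple_le_iff.2 (pow_mem (mem_adjoin_simple_self K x) _)
  have hEL : E ≤ L := adjoin_simple_le_iff.2 (subset_adjoin K _ ⟨x, rfl⟩)
  have hL : relfinrank E L ≤ finrank K⟮x⟯ F := by
    rw [relfinrank_eq_finrank_of_le hEL, extendScalars_adjoin]
    exact finrank_adjoin_range_pow_le p t fun a => ⟨⟨_, pow_mem_adjoin_simple_pow p t a.2⟩, rfl⟩
  refine Nat.le_of_mul_le_mul_right ?_ (finrank_pos (R := K⟮x⟯) (M := F))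
  calc p ^ t * finrank K⟮x⟯ F
      ≤ relfinrank E K⟮x⟯ * finrank K⟮x⟯ F :=
        Nat.mul_le_mul_right _ (le_relfinrank_adjoin_simple_pow hx hq)
    _ = relfinrank E L * finrank L F := by
        rw [relfinrank_mul_finrank_top hEx, relfinrank_mul_finrank_top hEL]
    _ ≤ finrank L F * finrank K⟮x⟯ F := by
        rw [mul_comm]
        exact Nat.mul_le_mul_left _ hL

theorem IsFunctionField.of_isAlgebraic (E : IntermediateField K F) [Algebra.IsAlgebraic K E] :
    IsFunctionField E F := by
  obtain ⟨x, hx, hfin⟩ := exists_transcendental_finiteDimensional K F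
  refine ⟨x, mt (IsAlgebraic.restrictScalars K) hx, ?_⟩
  have hle : K⟮x⟯ ≤ E⟮x⟯.restrictScalars K :=
    adjoin_simple_le_iff.2 (mem_adjoin_simple_self E x)
  exact Module.Finite.of_restrictScalars_finite K⟮x⟯ (extendScalars hle) F

end PowerSubfield

section CharP

open IntermediateField Module

variable {K F : Type*} [Field K] [Field F] [Algebra K F] [IsFunctionField K F]
  {S : Finset (ValuationSubring F)}

theorem exists_finset_sUnits_eq_isAlgebraic_mul_pow_mul (hS : ∀ O ∈ S, IsPlace K F O) {q : ℕ}
    (hq : 0 < q) : ∃ B : Finset F, ∀ e ∈ sUnits K S, ∃ c : F, IsAlgebraic K c ∧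
      ∃ w, ∃ b ∈ B, (e : F) = c * w ^ q * b := by
  classical
  obtain ⟨s, u, hu⟩ := exists_sUnits_eq_isAlgebraic_mul_prod_zpow hS
  refine ⟨Finset.univ.image fun r : Fin s → Fin q => ∏ j, (u j : F) ^ (r j : ℕ), fun e he => ?_⟩
  obtain ⟨c, hc, a, heq⟩ := hu e he
  have hq' : (q : ℤ) ≠ 0 := mod_cast hq.ne'
  have hdivmod : ∀ j, ∃ d : ℤ, ∃ r : Fin q, a j = d * q + (r : ℕ) := fun j =>
    ⟨a j / q, ⟨(a j % q).toNat, by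
      have := Int.emod_lt_of_pos (a j) (Int.natCast_pos.2 hq)
      omega⟩, by
      rw [Int.toNat_of_nonneg (Int.emod_nonneg _ hq'), mul_comm, Int.mul_ediv_add_emod]⟩
  choose d r hdr using hdivmod
  refine ⟨c, hc, ∏ j, (u j : F) ^ d j, _, Finset.mem_image_of_mem _ (Finset.mem_univ r), ?_⟩
  rw [heq, mul_assoc, ← Finset.prod_pow, ← Finset.prod_mul_distrib]
  refine congrArg (c * ·) (Finset.prod_congr rfl fun j _ => ?_)
  rw [hdr, zpow_add₀ (u j).ne_zero, zpow_mul, zpow_natCast, zpow_natCast]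

theorem exists_sInteger_ne_sum_sUnits_of_charP (p : ℕ) [Fact p.Prime] [CharP K p]
    (hS : ∀ O ∈ S, IsPlace K F O) (hSne : S.Nonempty) (N : ℕ) :
    ∃ r, SInteger K F S r ∧ ∀ k ≤ N, ∀ e : Fin k → sUnits K S, r ≠ ∑ i, ((e i : Fˣ) : F) := by
  have := charP_of_injective_algebraMap (algebraMap K F).injective p
  have := IsFunctionField.infinite K F
  have := IsFunctionField.of_isAlgebraic K (algebraicClosure K F)
  have hq : 0 < p ^ N := expChar_pow_pos F p N
  obtain ⟨B, hB⟩ := exists_finset_sUnits_eq_isAlgebraic_mul_pow_mul hS hq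
  let L := adjoin (algebraicClosure K F) (Set.range fun f : F => f ^ p ^ N)
  have hLpow : ∀ w : F, w ^ p ^ N ∈ L := fun w => subset_adjoin _ _ ⟨w, rfl⟩
  have hrank : N < finrank L F := (Nat.lt_pow_self (Fact.out : p.Prime).one_lt).trans_le
    (IsFunctionField.pow_le_finrank_adjoin_range_pow (algebraicClosure K F) p N)
  have : FiniteDimensional L F := Module.finite_of_finrank_pos (Nat.zero_lt_of_lt hrank)
  have : Infinite L := not_finite_iff_infinite.1 fun _ => not_finite_iff_infinite.2 ‹Infinite F›
    (Module.finite_of_finite L)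
  obtain ⟨f, hf⟩ := exists_forall_smul_ne_sum_smul_of_lt_finrank hrank B
  obtain ⟨h, hh₀, hh, hhf⟩ := exists_ne_zero_sInteger_mul hS hSne f
  refine ⟨h ^ p ^ N * f, ?_, fun k hk e heq => ?_⟩
  · rw [← Nat.sub_one_add_one hq.ne', pow_succ, mul_assoc]
    rw [sInteger_iff_mem_regularFunctions] at hh hhf ⊢
    exact mul_mem (pow_mem hh _) hhf
  choose c hc w b hb he using fun i => hB (e i) (e i).2
  have hcL : ∀ i, c i * w i ^ p ^ N ∈ L := fun i =>
    mul_mem (L.algebraMap_mem ⟨c i, mem_algebraicClosure_iff.2 (hc i)⟩) (hLpow (w i))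
  exact hf ⟨_, hLpow h⟩ (Subtype.coe_ne_coe.1 (pow_ne_zero _ hh₀)) k hk (fun i => ⟨_, hcL i⟩) b hb
    (heq.trans (Finset.sum_congr rfl fun i _ => he i))

end CharP

section Derivations

open Polynomial IntermediateField

theorem exists_derivation_algebraMap_eq_of_formallyEtale {R A B M : Type*} [CommRing R]
    [CommRing A] [CommRing B] [AddCommGroup M] [Algebra R A] [Algebra R B] [Algebra A B]
    [IsScalarTower R A B] [Module R M] [Module A M] [Module B M] [IsScalarTower R A M]
    [IsScalarTower R B M] [IsScalarTower A B M] [Algebra.FormallyEtale A B]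
    (d : Derivation R A M) : ∃ D : Derivation R B M, ∀ a, D (algebraMap A B a) = d a := by
  let φ : Ω[B⁄R] →ₗ[B] M := d.liftKaehlerDifferential.liftBaseChange B ∘ₗ
    (KaehlerDifferential.tensorKaehlerEquivOfFormallyEtale R A B).symm.toLinearMap
  refine ⟨φ.compDer (KaehlerDifferential.D R B), fun a => ?_⟩
  simp [φ, KaehlerDifferential.tensorKaehlerEquivOfFormallyEtale_symm_D_algebraMap]

variable {K F : Type*} [Field K] [Field F] [Algebra K F]

open scoped IntermediateField.algebraAdjoinAdjoin in
theorem exists_derivation_apply_eq_one {z : F} (hz : Transcendental K z)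
    [Algebra.IsSeparable K⟮z⟯ F] : ∃ D : Derivation K F F, D z = 1 := by
  let A := Algebra.adjoin K {z}
  have : Algebra.FormallyEtale A K⟮z⟯ := .of_isLocalization (nonZeroDivisors A)
  have : Algebra.FormallyEtale K⟮z⟯ F := .of_isSeparable _ _
  have : Algebra.FormallyEtale A F := .comp A K⟮z⟯ F
  let e : K[X] ≃ₐ[K] A := Polynomial.algEquivOfTranscendental K z hz
  have hcoe (f : K[X]) : (e f : F) = aeval z f := (Subalgebra.aeval_coe ..).symm
  have he : ∀ a : A, aeval z (e.symm a) = (a : F) := fun a => (hcoe _).symm.trans <|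
    congrArg Subtype.val (e.apply_symm_apply a)
  let d : Derivation K A F := Derivation.mk'
    ((aeval z).toLinearMap ∘ₗ derivative ∘ₗ e.symm.toLinearMap) fun a b => by
      simp [he, Algebra.smul_def, derivative_mul]
      ring
  obtain ⟨D, hD⟩ := exists_derivation_algebraMap_eq_of_formallyEtale (B := F) d
  have hX : algebraMap A F (e X) = z := (hcoe X).trans (aeval_X z)
  refine ⟨D, ?_⟩
  rw [← hX, hD]
  simp [d]

theorem derivation_eq_zero_of_isAlgebraic [CharZero K] (D : Derivation K F F) {c : F}
    (hc : IsAlgebraic K c) : D c = 0 := by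
  have hroot := D.map_aeval (minpoly K c) c
  rw [minpoly.aeval, map_zero, smul_eq_mul, eq_comm, mul_eq_zero] at hroot
  exact hroot.resolve_left
    ((minpoly.irreducible hc.isIntegral).separable.aeval_derivative_ne_zero (minpoly.aeval K c))

theorem derivation_prod_zpow {ι : Type*} (D : Derivation K F F) {u : ι → F} (hu : ∀ j, u j ≠ 0)
    (a : ι → ℤ) (T : Finset ι) : D (∏ j ∈ T, u j ^ a j) =
      (∑ j ∈ T, (a j : F) * (D (u j) / u j)) * ∏ j ∈ T, u j ^ a j := by
  classical
  induction T using Finset.induction_on with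
  | empty => simp
  | insert j T hj ih =>
    rw [Finset.prod_insert hj, Finset.sum_insert hj, D.leibniz, ih, D.leibniz_zpow]
    simp only [smul_eq_mul, zsmul_eq_mul]
    rw [zpow_sub_one₀ (hu j)]
    field_simp
    ring

theorem derivation_pow_apply_pow (D : Derivation K F F) {z : F} (hz : D z = 1) (l i : ℕ) :
    ((D : Module.End K F) ^ l) (z ^ i) = (i.descFactorial l : F) * z ^ (i - l) := by
  induction l with
  | zero => simp
  | succ l ih =>
    rw [pow_succ', Module.End.mul_apply, ih, Derivation.coeFn_coe, D.leibniz, D.leibniz_pow, hz,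
      Nat.descFactorial_succ]
    simp only [Derivation.map_natCast, smul_eq_mul, nsmul_eq_mul, mul_one]
    push_cast
    rw [Nat.sub_sub]
    ring

end Derivations

section DifferentialRelations

open MvPolynomial

variable {K F : Type*} [Field K] [Field F] [Algebra K F] {ι : Type*}

theorem exists_forall_derivation_eval_eq_eval (D : Derivation K F F) (Q : MvPolynomial ι F) :
    ∃ Q' : MvPolynomial ι F, ∀ a : ι → F, (∀ j, D (a j) = 0) → D (eval a Q) = eval a Q' := by
  induction Q using MvPolynomial.induction_on with
  | C c => exact ⟨C (D c), fun a _ => by simp⟩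
  | add P Q hP hQ =>
    obtain ⟨P', hP'⟩ := hP
    obtain ⟨Q', hQ'⟩ := hQ
    exact ⟨P' + Q', fun a ha => by simp [hP' a ha, hQ' a ha]⟩
  | mul_X P i hP =>
    obtain ⟨P', hP'⟩ := hP
    exact ⟨P' * X i, fun a ha => by simp [hP' a ha, ha i, mul_comm]⟩

variable [Fintype ι]

/-- `f` is zero, or its logarithmic derivative `D f / f` is a linear combination of the `g j` with
coefficients that are constants of `D`. This is the differential equation satisfied by all
products `c * ∏ j, u j ^ a j` with `D c = 0`, where `g j = D (u j) / u j`. -/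
def HasLogDerivInSpan (D : Derivation K F F) (g : ι → F) (f : F) : Prop :=
  ∃ a : ι → F, (∀ j, D (a j) = 0) ∧ D f = (∑ j, a j * g j) * f

theorem HasLogDerivInSpan.zero (D : Derivation K F F) (g : ι → F) : HasLogDerivInSpan D g 0 :=
  ⟨0, by simp, by simp⟩

theorem hasLogDerivInSpan_mul_prod_zpow (D : Derivation K F F) {u : ι → F} (hu : ∀ j, u j ≠ 0)
    {c : F} (hc : D c = 0) (a : ι → ℤ) :
    HasLogDerivInSpan D (fun j => D (u j) / u j) (c * ∏ j, u j ^ a j) := by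
  refine ⟨fun j => a j, by simp, ?_⟩
  rw [D.leibniz, derivation_prod_zpow D hu, hc]
  simp only [smul_eq_mul, mul_zero, add_zero]
  ring

theorem exists_forall_derivation_pow_apply_eq_eval_mul (D : Derivation K F F) (g : ι → F)
    (i : ℕ) : ∃ Q : MvPolynomial ι F, ∀ a : ι → F, (∀ j, D (a j) = 0) → ∀ f,
      D f = (∑ j, a j * g j) * f → ((D : Module.End K F) ^ i) f = eval a Q * f := by
  induction i with
  | zero => exact ⟨1, fun a _ f _ => by simp⟩
  | succ i ih =>
    obtain ⟨Q, hQ⟩ := ih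
    obtain ⟨Q', hQ'⟩ := exists_forall_derivation_eval_eq_eval D Q
    refine ⟨Q' + Q * ∑ j, X j * C (g j), fun a ha f hf => ?_⟩
    rw [pow_succ', Module.End.mul_apply, hQ a ha f hf, Derivation.coeFn_coe, D.leibniz, hf,
      hQ' a ha]
    simp only [smul_eq_mul, map_add, map_mul, map_sum, eval_X, eval_C]
    ring

theorem exists_ne_zero_aeval_eq_zero_of_card_lt {τ σ : Type*} [Fintype τ] [Fintype σ]
    (h : Fintype.card τ < Fintype.card σ) (P : σ → MvPolynomial τ F) :
    ∃ G : MvPolynomial σ F, G ≠ 0 ∧ aeval P G = 0 := by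
  by_contra! hG
  have hP : AlgebraicIndependent F P := algebraicIndependent_iff.2 fun G => not_imp_not.1 (hG G)
  have hcard := hP.lift_cardinalMk_le_trdeg
  rw [MvPolynomial.trdeg_of_isDomain] at hcard
  simp only [Cardinal.mk_fintype, Cardinal.lift_natCast, Nat.cast_le] at hcard
  omega

theorem exists_ne_zero_forall_eval_derivation_pow_sum_eq_zero {κ : Type*} [Fintype κ]
    (D : Derivation K F F) (g : ι → F) {m : ℕ} (hm : Fintype.card κ * (Fintype.card ι + 1) < m) :
    ∃ G : MvPolynomial (Fin m) F, G ≠ 0 ∧ ∀ f : κ → F, (∀ k, HasLogDerivInSpan D g (f k)) →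
      eval (fun l : Fin m => ((D : Module.End K F) ^ (l : ℕ)) (∑ k, f k)) G = 0 := by
  choose Q hQ using exists_forall_derivation_pow_apply_eq_eval_mul D g
  let P (l : Fin m) : MvPolynomial (κ × Option ι) F :=
    ∑ k, rename (fun j => (k, some j)) (Q l) * X (k, none)
  obtain ⟨G, hG₀, hG⟩ := exists_ne_zero_aeval_eq_zero_of_card_lt (by simpa using hm) P
  refine ⟨G, hG₀, fun f hf => ?_⟩
  choose a ha haf using hf
  let y : κ × Option ι → F := fun t => t.2.elim (f t.1) (a t.1)
  have hP : ∀ l, eval y (P l) = ((D : Module.End K F) ^ (l : ℕ)) (∑ k, f k) := fun l => by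
    simp only [P, map_sum, map_mul, eval_rename, eval_X]
    exact Finset.sum_congr rfl fun k _ => (hQ l (a k) (ha k) (f k) (haf k)).symm
  have hyG : eval (fun l => eval y (P l)) G = 0 := by
    rw [← map_zero (eval y), ← hG, aeval_eq_bind₁]
    exact (eval₂Hom_bind₁ _ y P G).symm
  simpa only [hP] using hyG

theorem exists_eval_mulVec_algebraMap_ne_zero [Infinite K] {n : Type*} [Fintype n]
    [DecidableEq n] {M : Matrix n n F} (hM : IsUnit M.det) {G : MvPolynomial n F} (hG : G ≠ 0) :
    ∃ c : n → K, eval (M.mulVec fun i => algebraMap K F (c i)) G ≠ 0 := by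
  by_contra! hc
  have : Infinite F := .of_injective _ (algebraMap K F).injective
  let H : MvPolynomial n F := bind₁ (fun l => ∑ i, C (M l i) * X i) G
  have hH : ∀ y, eval y H = eval (M.mulVec y) G := fun y => by
    simp only [H, eval, eval₂Hom_bind₁]
    congr 2
    ext l
    simp [Matrix.mulVec, dotProduct]
  have hH₀ : H = 0 := funext_set (fun _ => Set.range (algebraMap K F))
    (fun _ => Set.infinite_range_of_injective (algebraMap K F).injective) fun y hy => by
      choose c hcy using fun i => hy i (Set.mem_univ i)
      rw [hH, map_zero, ← hc c, funext hcy]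
  refine hG (MvPolynomial.funext fun y => ?_)
  have hy := hH (M⁻¹.mulVec y)
  rwa [hH₀, Matrix.mulVec_mulVec, Matrix.mul_nonsing_inv _ hM, Matrix.one_mulVec, map_zero,
    eq_comm, ← map_zero (eval y)] at hy

theorem isUnit_det_derivation_pow_apply_pow [CharZero F] (D : Derivation K F F) {z : F}
    (hz : D z = 1) (m : ℕ) : IsUnit (Matrix.det (Matrix.of fun l i : Fin m =>
      ((D : Module.End K F) ^ (l : ℕ)) (z ^ (i : ℕ)))) := by
  rw [Matrix.det_of_isUpperTriangular, isUnit_iff_ne_zero, Finset.prod_ne_zero_iff]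
  · intro i _
    simp [derivation_pow_apply_pow D hz, Nat.descFactorial_self, Nat.factorial_ne_zero]
  · intro l i hil
    have hil' : (i : ℕ) < l := hil
    simp [derivation_pow_apply_pow D hz, Nat.descFactorial_of_lt hil']

theorem exists_eval_derivation_pow_sum_smul_pow_ne_zero [CharZero K] (D : Derivation K F F)
    {z : F} (hz : D z = 1) {m : ℕ} {G : MvPolynomial (Fin m) F} (hG : G ≠ 0) :
    ∃ c : Fin m → K, eval (fun l : Fin m =>
      ((D : Module.End K F) ^ (l : ℕ)) (∑ i, c i • z ^ (i : ℕ))) G ≠ 0 := by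
  have : CharZero F := charZero_of_injective_algebraMap (algebraMap K F).injective
  obtain ⟨c, hc⟩ := exists_eval_mulVec_algebraMap_ne_zero (K := K)
    (isUnit_det_derivation_pow_apply_pow D hz m) hG
  refine ⟨c, ne_of_eq_of_ne ?_ hc⟩
  congr 2
  ext l
  rw [map_sum]
  exact Finset.sum_congr rfl fun i _ => by rw [map_smul, Algebra.smul_def, mul_comm]; rfl

end DifferentialRelations

section CharZero

variable {K F : Type*} [Field K] [Field F] [Algebra K F] [IsFunctionField K F]
  {S : Finset (ValuationSubring F)}

theorem exists_forall_sUnits_hasLogDerivInSpan [CharZero K] (hS : ∀ O ∈ S, IsPlace K F O)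
    (D : Derivation K F F) :
    ∃ (s : ℕ) (g : Fin s → F), ∀ e ∈ sUnits K S, HasLogDerivInSpan D g (e : F) := by
  obtain ⟨s, u, hu⟩ := exists_sUnits_eq_isAlgebraic_mul_prod_zpow hS
  refine ⟨s, fun j => D (u j) / u j, fun e he => ?_⟩
  obtain ⟨c, hc, a, heq⟩ := hu e he
  rw [heq]
  exact hasLogDerivInSpan_mul_prod_zpow D (fun j => (u j).ne_zero)
    (derivation_eq_zero_of_isAlgebraic D hc) a

theorem exists_sInteger_ne_sum_sUnits_of_charZero [CharZero K] (hS : ∀ O ∈ S, IsPlace K F O)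
    (hSne : S.Nonempty) (N : ℕ) :
    ∃ r, SInteger K F S r ∧ ∀ k ≤ N, ∀ e : Fin k → sUnits K S, r ≠ ∑ i, ((e i : Fˣ) : F) := by
  obtain ⟨z, hz, hzS⟩ := exists_transcendental_sInteger hS hSne
  have := IsFunctionField.finiteDimensional_adjoin_simple hz
  obtain ⟨D, hD⟩ := exists_derivation_apply_eq_one hz
  obtain ⟨s, g, hg⟩ := exists_forall_sUnits_hasLogDerivInSpan hS D
  obtain ⟨G, hG₀, hG⟩ := exists_ne_zero_forall_eval_derivation_pow_sum_eq_zero (κ := Fin N) D g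
    (Nat.lt_succ_self _)
  obtain ⟨c, hc⟩ := exists_eval_derivation_pow_sum_smul_pow_ne_zero D hD hG₀
  refine ⟨∑ i, c i • z ^ (i : ℕ), ?_, fun k hk e heq => hc ?_⟩
  · rw [sInteger_iff_mem_regularFunctions] at hzS ⊢
    exact sum_mem fun i _ => Subalgebra.smul_mem _ (pow_mem hzS _) _
  obtain ⟨n, rfl⟩ := Nat.exists_eq_add_of_le hk
  have hsum : ∑ i, ((e i : Fˣ) : F) =
      ∑ i, Fin.append (fun i => ((e i : Fˣ) : F)) (0 : Fin n → F) i := by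
    simp [Fin.sum_univ_add]
  rw [heq, hsum]
  refine hG _ (Fin.addCases (fun i => ?_) fun i => ?_)
  · simpa only [Fin.append_left] using hg _ (e i).2
  · rw [Fin.append_right]
    exact .zero D g

end CharZero

theorem sums_of_units_in_function_fields_general (K F : Type*) [Field K] [Field F] [Algebra K F]
    (x : F) (hx : Transcendental K x)
    (hfin : FiniteDimensional (IntermediateField.adjoin K ({x} : Set F)) F)
    (S : Finset (ValuationSubring F)) (hS : ∀ O ∈ S, IsPlace K F O) (hSne : S.Nonempty) (N : ℕ) :
    ∃ r : F, SInteger K F S r ∧ ¬ ∃ (k : ℕ) (e : Fin k → F), k ≤ N ∧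
      (∀ i, SInteger K F S (e i) ∧ ∃ e' : F, SInteger K F S e' ∧ e i * e' = 1) ∧
      r = ∑ i, e i := by
  have : IsFunctionField K F := ⟨x, hx, hfin⟩
  obtain ⟨r, hr, hne⟩ : ∃ r, SInteger K F S r ∧
      ∀ k ≤ N, ∀ e : Fin k → sUnits K S, r ≠ ∑ i, ((e i : Fˣ) : F) := by
    obtain ⟨p, hp⟩ := CharP.exists K
    obtain hp₀ | rfl := CharP.char_is_prime_or_zero K p
    · have : Fact p.Prime := ⟨hp₀⟩
      exact exists_sInteger_ne_sum_sUnits_of_charP p hS hSne N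
    · have : CharZero K := CharP.charP_to_charZero K
      exact exists_sInteger_ne_sum_sUnits_of_charZero hS hSne N
  refine ⟨r, hr, fun ⟨k, e, hk, he, heq⟩ => ?_⟩
  choose he e' he' hee' using he
  choose u hu hue using fun i => (he i).exists_mem_sUnits (he' i) (hee' i)
  exact hne k hk (fun i => ⟨u i, hu i⟩) (heq.trans (Finset.sum_congr rfl fun i _ => (hue i).symm))

/-- For every positive integer `N` there is an `S`-integer that is not a sum of at most `N`
units of the ring of `S`-integers of an algebraic function field `F` over a perfect field `K`. -/
theorem sums_of_units_in_function_fields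
    (K F : Type*) [Field K] [PerfectField K] [Field F] [Algebra K F]
    (x : F) (hx : Transcendental K x)
    (hfin : FiniteDimensional (IntermediateField.adjoin K ({x} : Set F)) F)
    (S : Finset (ValuationSubring F))
    (hS : ∀ O ∈ S, IsPlace K F O) (hSne : S.Nonempty)
    (N : ℕ) (hN : 0 < N) :
    ∃ r : F, SInteger K F S r ∧
      ¬ ∃ (k : ℕ) (e : Fin k → F), 1 ≤ k ∧ k ≤ N ∧
        (∀ i, SInteger K F S (e i) ∧ ∃ e' : F, SInteger K F S e' ∧ e i * e' = 1) ∧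
        r = ∑ i, e i := by
  obtain ⟨r, hr, hne⟩ := sums_of_units_in_function_fields_general K F x hx hfin S hS hSne N
  exact ⟨r, hr, fun ⟨k, e, _, h⟩ => hne ⟨k, e, h⟩⟩
end

section
/- Let K be a perfect field, K(x) the rational function field over K, and F a finite field extension of K(x). Let O_F be the integral closure of the polynomial ring K[x] in F. Then for every positive integer N there exists an element r ∈ O_F such that r cannot be written as e_1 + ⋯ + e_k for any 1 ≤ k ≤ N and units e_1, …, e_k of O_F. -/
/-!
Let `p` be the characteristic exponent of `K` and `L` the maximal separable subextension of `F`.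
For some `g` the map `y ↦ y ^ p ^ g` is a ring homomorphism `F → L`, so it suffices that, for some
`r ∈ K[x]`, the power `r ^ p ^ g` is not a sum of few units of `O_L`.

Let `E` be an algebraic closure of `K`. By Hensel's lemma the substitution `x ↦ a + t` extends to a
ring homomorphism `φ : O_L → E⟦t⟧` for almost every `a ∈ E`. The units of `O_L` are finitely
generated modulo constants, so `φ` maps each of them to some `z * ∏ i, η i ^ b i` with `z ∈ E` and
fixed power series `η i` of constant coefficient `1`. In characteristic zero the coefficients of
such a product are polynomials in `z` and `b`; in characteristic `p` the product modulo `t ^ p ^ e`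
depends on `b` modulo `p ^ e` only. In both cases the coefficients of a sum of `N` such products
satisfy an algebraic relation as soon as enough of them are considered, which the coefficients of
the powers `φ r ^ p ^ g` do not if `K` is infinite. If `K` is finite, then `z` ranges over a finite
set, and there are fewer sums of `N` products modulo `t ^ p ^ e` than powers `φ r ^ p ^ g`.
-/

open Polynomial IsDedekindDomain
open scoped PowerSeries Pointwise

section UnitsModuloConstants

theorem exists_fin_generators_modulo_ker {G M : Type*} [AddCommGroup G] [AddCommGroup M]
    [IsNoetherian ℤ M] (f : G →+ M) :
    ∃ (s : ℕ) (ε : Fin s → G), ∀ u, ∃ a : Fin s → ℤ, u - ∑ i, a i • ε i ∈ f.ker := by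
  obtain ⟨s, t, ht⟩ := Submodule.fg_iff_exists_fin_generating_family.mp
    (IsNoetherian.noetherian (AddSubgroup.toIntSubmodule f.range))
  have h_lift (i : Fin s) : ∃ e, f e = t i := by
    have h_mem : t i ∈ AddSubgroup.toIntSubmodule f.range :=
      ht ▸ Submodule.subset_span (Set.mem_range_self i)
    exact h_mem
  choose ε hε using h_lift
  refine ⟨s, ε, fun u => ?_⟩
  have h_mem : f u ∈ AddSubgroup.toIntSubmodule f.range := ⟨u, rfl⟩
  obtain ⟨a, ha⟩ := (Submodule.mem_span_range_iff_exists_fun ℤ).mp (ht ▸ h_mem)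
  refine ⟨a, ?_⟩
  simp only [AddMonoidHom.mem_ker, map_sub, map_sum, map_zsmul, hε, ha, sub_self]

theorem finite_heightOneSpectrum_of_isIntegral (V A : Type*) [CommRing V] [IsDomain V]
    [IsDiscreteValuationRing V] [CommRing A] [IsDedekindDomain A] [Algebra V A]
    [Algebra.IsIntegral V A] [Module.IsTorsionFree V A] : Finite (HeightOneSpectrum A) := by
  have : Finite ((IsLocalRing.maximalIdeal V).primesOver A) :=
    IsDedekindDomain.primesOver_finite (IsLocalRing.maximalIdeal V) A
  have h_under (P : HeightOneSpectrum A) :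
      IsLocalRing.maximalIdeal V = P.asIdeal.under V :=
    (IsLocalRing.eq_maximalIdeal (HeightOneSpectrum.under V P).isMaximal).symm
  refine Finite.of_injective (β := (IsLocalRing.maximalIdeal V).primesOver A)
    (fun P => ⟨P.asIdeal, P.isPrime, ⟨h_under P⟩⟩) fun P Q h => ?_
  exact HeightOneSpectrum.ext (congrArg Subtype.val h)

variable {K L : Type*} [Field K] [Field L] [Algebra (RatFunc K) L]
  [Algebra K[X] L] [IsScalarTower K[X] (RatFunc K) L]

theorem natDegree_eq_zero_of_inftyValuation_le_one [DecidableEq (RatFunc K)] {p : K[X]}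
    (hp : RatFunc.inftyValuation K (algebraMap K[X] (RatFunc K) p) ≤ 1) : p.natDegree = 0 := by
  by_cases h0 : p = 0
  · rw [h0, natDegree_zero]
  · rw [RatFunc.inftyValuation_apply, RatFunc.inftyValuation.polynomial K h0,
      ← WithZero.exp_zero, WithZero.exp_le_exp] at hp
    exact_mod_cast le_antisymm hp (by positivity)

-- The coefficients of the minimal polynomial are polynomials without a pole at infinity.
theorem isIntegralElem_C_of_isIntegral_inftyValuation [DecidableEq (RatFunc K)] {u : L}
    (h_fin : IsIntegral K[X] u)
    (h_infty : IsIntegral (RatFunc.inftyValuation K).valuationSubring u) :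
    ((algebraMap K[X] L).comp C).IsIntegralElem u := by
  have h_minpoly := minpoly.isIntegrallyClosed_eq_field_fractions' (RatFunc K) h_fin
  have h_minpoly_infty := minpoly.isIntegrallyClosed_eq_field_fractions' (RatFunc K) h_infty
  have h_natDegree (n : ℕ) : ((minpoly K[X] u).coeff n).natDegree = 0 := by
    refine natDegree_eq_zero_of_inftyValuation_le_one ?_
    rw [← coeff_map, ← h_minpoly, h_minpoly_infty, coeff_map]
    exact ((minpoly (RatFunc.inftyValuation K).valuationSubring u).coeff n).2
  have h_lifts : minpoly K[X] u ∈ lifts (C : K →+* K[X]) :=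
    (lifts_iff_coeff_lifts _).mpr fun n => ⟨_, (eq_C_of_natDegree_eq_zero (h_natDegree n)).symm⟩
  obtain ⟨q, hq, -, hq_monic⟩ := lifts_and_natDegree_eq_and_monic h_lifts (minpoly.monic h_fin)
  refine ⟨q, hq_monic, ?_⟩
  rw [← eval₂_map, hq]
  exact minpoly.aeval K[X] u

/-- The valuations above infinity of the unit group have finitely generated image, and a unit in
their common kernel is integral at every place, hence integral over `K`. -/
theorem exists_fin_generators_units_modulo_isIntegralElem_C (K L : Type*) [Field K] [Field L]
    [Algebra (RatFunc K) L] [Algebra K[X] L] [IsScalarTower K[X] (RatFunc K) L]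
    [FiniteDimensional (RatFunc K) L] [Algebra.IsSeparable (RatFunc K) L] :
    ∃ (s : ℕ) (ε : Fin s → (integralClosure K[X] L)ˣ), ∀ u : (integralClosure K[X] L)ˣ,
      ∃ (c : (integralClosure K[X] L)ˣ) (a : Fin s → ℤ), u = c * ∏ i, ε i ^ a i ∧
        ((algebraMap K[X] (integralClosure K[X] L)).comp C).IsIntegralElem
          (c : integralClosure K[X] L) := by
  classical
  let V := (RatFunc.inftyValuation K).valuationSubring
  let A := integralClosure V L
  have : IsDedekindDomain A := integralClosure.isDedekindDomain V (RatFunc K) L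
  have : IsFractionRing A L :=
    IsIntegralClosure.isFractionRing_of_finite_extension V (RatFunc K) L A
  have : Algebra.IsIntegral V A := IsIntegralClosure.isIntegral_algebra V L
  have : Finite (HeightOneSpectrum A) := finite_heightOneSpectrum_of_isIntegral V A
  let O := integralClosure K[X] L
  let ord (P : HeightOneSpectrum A) : Oˣ →* Multiplicative ℤ :=
    P.valuationOfNeZero.comp (Units.map (algebraMap O L).toMonoidHom)
  obtain ⟨s, ε, h⟩ := exists_fin_generators_modulo_ker
    (AddMonoidHom.mk' (fun u P => (ord P u.toMul).toAdd : Additive Oˣ → HeightOneSpectrum A → ℤ)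
      fun u v => funext fun P => by simp)
  refine ⟨s, fun i => (ε i).toMul, fun u => ?_⟩
  obtain ⟨a, ha⟩ := h (Additive.ofMul u)
  set c := Additive.ofMul u - ∑ i, a i • ε i
  have h_infty : IsIntegral V (algebraMap O L c.toMul) := by
    obtain ⟨z, hz⟩ := HeightOneSpectrum.mem_integers_of_valuation_le_one (R := A) L
      (algebraMap O L c.toMul) fun P => by
        have h_ord : ord P c.toMul = 1 := congrFun ha P
        exact (P.valuationOfNeZero_eq _).symm.le.trans (WithZero.coe_le_one.mpr h_ord.le)
    exact hz ▸ z.2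
  refine ⟨c.toMul, a, ?_, ?_⟩
  · have h_add : Additive.ofMul u = c + ∑ i, a i • ε i := (sub_add_cancel _ _).symm
    simpa using congrArg Additive.toMul h_add
  · obtain ⟨q, hq, hq0⟩ := isIntegralElem_C_of_isIntegral_inftyValuation
      ((c.toMul : Oˣ) : O).2 h_infty
    refine ⟨q, hq, FaithfulSMul.algebraMap_injective O L ?_⟩
    rw [map_zero, hom_eval₂, ← RingHom.comp_assoc, ← IsScalarTower.algebraMap_eq]
    exact hq0

end UnitsModuloConstants

section Expansion

variable (K : Type*) {E : Type*} [Field K] [Field E] [Algebra K E]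

/-- The expansion of a polynomial at the point `a`, that is, the substitution `x ↦ a + t` into
power series in `t`. -/
noncomputable def expansionAt (a : E) : K[X] →ₐ[K] E⟦X⟧ :=
  aeval (PowerSeries.C a + PowerSeries.X)

variable {K}

theorem expansionAt_C (a : E) (k : K) :
    expansionAt K a (Polynomial.C k) = PowerSeries.C (algebraMap K E k) := by
  rw [expansionAt, aeval_C, PowerSeries.algebraMap_apply]

theorem expansionAt_eq_taylor (a : E) (r : K[X]) :
    expansionAt K a r = ((taylor a (r.map (algebraMap K E)) : E[X]) : E⟦X⟧) := by
  let taylorExpansion : K[X] →ₐ[K] E⟦X⟧ :=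
    (((Polynomial.coeToPowerSeries.algHom E).comp (taylorAlgHom a)).restrictScalars K).comp
      (mapAlg K E)
  have h : expansionAt K a = taylorExpansion := by
    refine Polynomial.algHom_ext ?_
    simp [expansionAt, taylorExpansion, mapAlg_eq_map, add_comm]
  rw [h]
  simp [taylorExpansion, mapAlg_eq_map]

theorem expansionAt_injective (a : E) : Function.Injective (expansionAt K a) := by
  intro r s h
  rw [expansionAt_eq_taylor, expansionAt_eq_taylor] at h
  exact Polynomial.map_injective _ (algebraMap K E).injective
    (taylor_injective a (Polynomial.coe_injective E h))

theorem constantCoeff_expansionAt (a : E) (r : K[X]) :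
    PowerSeries.constantCoeff (expansionAt K a r) = aeval a r := by
  rw [expansionAt_eq_taylor, ← PowerSeries.coeff_zero_eq_constantCoeff_apply, coeff_coe,
    taylor_coeff_zero, eval_map_algebraMap]

theorem coeff_expansionAt_algebraMap (k : K) (r : K[X]) (n : ℕ) :
    PowerSeries.coeff n (expansionAt K (algebraMap K E k) r) =
      algebraMap K E ((taylor k r).coeff n) := by
  rw [expansionAt_eq_taylor, coeff_coe, ← map_taylor, coeff_map]

theorem eq_zero_of_X_pow_dvd_expansionAt {a : E} {r : K[X]} {m : ℕ} (hr : r.degree < m)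
    (h : (PowerSeries.X : E⟦X⟧) ^ m ∣ expansionAt K a r) : r = 0 := by
  refine expansionAt_injective a ?_
  rw [map_zero, expansionAt_eq_taylor, ← Polynomial.coe_zero, Polynomial.coe_inj]
  ext n
  rcases lt_or_ge n m with hn | hn
  · rw [← coeff_coe, ← expansionAt_eq_taylor, PowerSeries.X_pow_dvd_iff.mp h n hn, coeff_zero]
  · rw [coeff_zero, coeff_eq_zero_of_degree_lt]
    rw [degree_taylor, degree_map]
    exact hr.trans_le (by exact_mod_cast hn)

end Expansion

section ExpansionOfIntegers

theorem separable_map_of_resultant_ne_zero {R E : Type*} [CommRing R] [Field E] {f : R[X]}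
    (hf : 0 < f.natDegree) {τ : R →+* E} (h : τ (resultant f f.derivative) ≠ 0) :
    (f.map τ).Separable := by
  obtain ⟨p, q, -, -, hpq⟩ :=
    exists_mul_add_mul_eq_C_resultant f f.derivative le_rfl le_rfl (Or.inl hf.ne')
  have h_unit : IsUnit (f.map τ * p.map τ + (f.map τ).derivative * q.map τ) := by
    rw [derivative_map, ← Polynomial.map_mul, ← Polynomial.map_mul, ← Polynomial.map_add, hpq,
      map_C]
    exact isUnit_C.mpr h.isUnit
  obtain ⟨u, hu⟩ := h_unit
  refine ⟨↑u⁻¹ * p.map τ, ↑u⁻¹ * q.map τ, ?_⟩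
  calc _ = (↑u⁻¹ : E[X]) * (f.map τ * p.map τ + (f.map τ).derivative * q.map τ) := by ring
    _ = 1 := by rw [← hu, Units.inv_mul]

theorem resultant_derivative_ne_zero_of_separable_map {R k : Type*} [CommRing R] [Field k]
    {f : R[X]} {ι : R →+* k} (hι : Function.Injective ι) (hf : (f.map ι).Separable) :
    resultant f f.derivative ≠ 0 := by
  have : resultant (f.map ι) (f.map ι).derivative ≠ 0 := resultant_ne_zero _ _ hf
  rw [derivative_map, natDegree_map_eq_of_injective hι, natDegree_map_eq_of_injective hι,
    resultant_map_map] at this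
  exact fun h0 => this (by rw [h0, map_zero])

theorem exists_isRoot_of_separable_map_constantCoeff {E : Type*} [Field E] [IsAlgClosed E]
    {f : E⟦X⟧[X]} (hf : f.Monic) (h_deg : 0 < f.natDegree)
    (h_sep : (f.map PowerSeries.constantCoeff).Separable) : ∃ y, f.IsRoot y := by
  obtain ⟨b, hb⟩ : ∃ b, (f.map PowerSeries.constantCoeff).IsRoot b := by
    refine IsAlgClosed.exists_root _ ?_
    rw [hf.degree_map, degree_eq_natDegree hf.ne_zero]
    exact_mod_cast h_deg.ne'
  have h_eval (q : E⟦X⟧[X]) : PowerSeries.constantCoeff (q.eval (PowerSeries.C b)) =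
      (q.map PowerSeries.constantCoeff).eval b := by
    rw [eval_map, ← PowerSeries.constantCoeff_C b, eval₂_at_apply, PowerSeries.constantCoeff_C]
  have h_hensel : HenselianRing E⟦X⟧ (Ideal.span {PowerSeries.X}) := inferInstance
  have h_root : f.eval (PowerSeries.C b) ∈ Ideal.span {PowerSeries.X} := by
    rw [Ideal.mem_span_singleton, PowerSeries.X_dvd_iff, h_eval]
    exact hb
  have h_simple : IsUnit (f.derivative.eval (PowerSeries.C b)) := by
    rw [PowerSeries.isUnit_iff_constantCoeff, h_eval, ← derivative_map]
    exact (h_sep.eval₂_derivative_ne_zero (RingHom.id E) hb).isUnit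
  obtain ⟨y, hy, -⟩ := h_hensel.is_henselian f hf (PowerSeries.C b) h_root (h_simple.map _)
  exact ⟨y, hy⟩

theorem nonempty_algHom_of_aeval_minpoly_eq_zero {k L M : Type*} [Field k] [Field L] [Field M]
    [Algebra k L] [Algebra k M] {θ : L} (hθ : IsIntegral k θ)
    (h_top : IntermediateField.adjoin k {θ} = ⊤) {y : M} (hy : aeval y (minpoly k θ) = 0) :
    Nonempty (L →ₐ[k] M) := by
  let root : {x // x ∈ (minpoly k θ).aroots M} := ⟨y, mem_aroots.mpr ⟨minpoly.ne_zero hθ, hy⟩⟩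
  let ψ : IntermediateField.adjoin k {θ} →ₐ[k] M :=
    (IntermediateField.algHomAdjoinIntegralEquiv k hθ).symm root
  exact ⟨ψ.comp ((IntermediateField.equivOfEq h_top).trans
    IntermediateField.topEquiv).symm.toAlgHom⟩

theorem exists_comp_eq_of_range_le {A S M : Type*} [CommRing A] [CommRing S] [CommRing M]
    (ψ : A →+* M) {ι : S →+* M} (hι : Function.Injective ι) (h : ψ.range ≤ ι.range) :
    ∃ φ : A →+* S, ι.comp φ = ψ := by
  let e := RingEquiv.ofBijective ι.rangeRestrict
    ⟨fun _ _ hxy => hι (congrArg Subtype.val hxy), ι.rangeRestrict_surjective⟩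
  refine ⟨e.symm.toRingHom.comp (ψ.codRestrict ι.range fun x => h ⟨x, rfl⟩),
    RingHom.ext fun x => ?_⟩
  exact congrArg Subtype.val (e.apply_symm_apply _)

theorem exists_ringHom_extending_of_root_minpoly {R k L M : Type*} [CommRing R] [IsDomain R]
    [IsIntegrallyClosed R] [Field k] [Algebra R k] [IsFractionRing R k] [Field L] [Algebra k L]
    [Algebra R L] [IsScalarTower R k L] [Field M] {θ : L} (hθ : IsIntegral R θ)
    (h_top : IntermediateField.adjoin k {θ} = ⊤) {ρ : R →+* M} (hρ : Function.Injective ρ)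
    {y : M} (hy : ((minpoly R θ).map ρ).IsRoot y) :
    ∃ ψ : L →+* M, ψ.comp (algebraMap R L) = ρ := by
  let τ : k →+* M := IsFractionRing.lift hρ
  have hτ : τ.comp (algebraMap R k) = ρ :=
    RingHom.ext fun r => IsFractionRing.lift_algebraMap hρ r
  let _ : Algebra k M := τ.toAlgebra
  obtain ⟨ψ⟩ : Nonempty (L →ₐ[k] M) := by
    refine nonempty_algHom_of_aeval_minpoly_eq_zero hθ.tower_top h_top (y := y) ?_
    rw [minpoly.isIntegrallyClosed_eq_field_fractions' k hθ, aeval_def, eval₂_map,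
      RingHom.algebraMap_toAlgebra, hτ, ← eval_map, hy.eq_zero]
  refine ⟨ψ, ?_⟩
  rw [IsScalarTower.algebraMap_eq R k L, ← RingHom.comp_assoc, ψ.comp_algebraMap]
  exact hτ

theorem exists_ringHom_integralClosure_extending {R L S M : Type*} [CommRing R] [CommRing L]
    [Algebra R L] [CommRing S] [IsIntegrallyClosed S] [Field M] [Algebra S M]
    [IsFractionRing S M] {σ : R →+* S} {ψ : L →+* M}
    (h : ψ.comp (algebraMap R L) = (algebraMap S M).comp σ) :
    ∃ φ : integralClosure R L →+* S, ∀ r, φ (algebraMap R _ r) = σ r := by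
  have h_inj : Function.Injective (algebraMap S M) := IsFractionRing.injective S M
  obtain ⟨φ, hφ⟩ := exists_comp_eq_of_range_le
    (ψ.comp (algebraMap (integralClosure R L) L)) h_inj <| by
      rintro _ ⟨z, rfl⟩
      exact IsIntegrallyClosed.isIntegral_iff.mp (IsIntegral.map_of_comp_eq σ ψ h.symm z.2)
  exact ⟨φ, fun r => h_inj ((RingHom.congr_fun hφ _).trans (RingHom.congr_fun h r))⟩

theorem exists_isIntegral_primitive_element (R k L : Type*) [CommRing R] [IsDomain R] [Field k]
    [Algebra R k] [IsFractionRing R k] [Field L] [Algebra k L] [Algebra R L]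
    [IsScalarTower R k L] [FiniteDimensional k L] [Algebra.IsSeparable k L] :
    ∃ θ : L, IsIntegral R θ ∧ IntermediateField.adjoin k {θ} = ⊤ := by
  obtain ⟨θ, hθ⟩ := Field.exists_primitive_element k L
  have : Algebra.IsAlgebraic R L :=
    (IsFractionRing.comap_isAlgebraic_iff (A := R) (K := k) (C := L)).mpr inferInstance
  obtain ⟨d, hd, h_integral⟩ :=
    (Algebra.IsAlgebraic.isAlgebraic (R := R) θ).exists_integral_multiple
  refine ⟨d • θ, h_integral, ?_⟩
  rw [eq_top_iff, ← hθ, IntermediateField.adjoin_le_iff, Set.singleton_subset_iff]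
  have hd' : algebraMap R k d ≠ 0 := (map_ne_zero_iff _ (IsFractionRing.injective R k)).mpr hd
  have h_div : θ = (algebraMap R k d)⁻¹ • (d • θ) := by
    rw [← algebraMap_smul k d θ, inv_smul_smul₀ hd']
  have h_mem := (IntermediateField.adjoin k {d • θ}).smul_mem (x := (algebraMap R k d)⁻¹)
    (IntermediateField.mem_adjoin_simple_self k (d • θ))
  rwa [← h_div] at h_mem

theorem eventually_cofinite_aeval_ne_zero {K E : Type*} [Field K] [Field E] [Algebra K E]
    {d : K[X]} (hd : d ≠ 0) : ∀ᶠ a : E in Filter.cofinite, aeval a d ≠ 0 := by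
  refine (rootSet_finite d E).subset fun a ha => ?_
  rw [mem_rootSet]
  exact ⟨hd, not_not.mp ha⟩

theorem eventually_cofinite_exists_ringHom_extending_expansionAt (K L E : Type*) [Field K]
    [Field L] [Algebra (RatFunc K) L] [Algebra K[X] L] [IsScalarTower K[X] (RatFunc K) L]
    [FiniteDimensional (RatFunc K) L] [Algebra.IsSeparable (RatFunc K) L]
    [Field E] [Algebra K E] [IsAlgClosed E] :
    ∀ᶠ a : E in Filter.cofinite, ∃ φ : integralClosure K[X] L →+* E⟦X⟧,
      ∀ r, φ (algebraMap K[X] _ r) = expansionAt K a r := by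
  obtain ⟨θ, hθ, h_top⟩ := exists_isIntegral_primitive_element K[X] (RatFunc K) L
  set f := minpoly K[X] θ
  have h_res : resultant f f.derivative ≠ 0 := by
    refine resultant_derivative_ne_zero_of_separable_map (RatFunc.algebraMap_injective K) ?_
    rw [← minpoly.isIntegrallyClosed_eq_field_fractions' (RatFunc K) hθ]
    exact Algebra.IsSeparable.isSeparable (RatFunc K) θ
  filter_upwards [eventually_cofinite_aeval_ne_zero h_res] with a ha
  let σ : K[X] →+* E⟦X⟧ := expansionAt K a
  have h_monic : f.Monic := minpoly.monic hθ
  have h_deg : 0 < f.natDegree := minpoly.natDegree_pos hθ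
  have h_sep : ((f.map σ).map PowerSeries.constantCoeff).Separable := by
    rw [Polynomial.map_map]
    refine separable_map_of_resultant_ne_zero h_deg ?_
    exact (constantCoeff_expansionAt a _).trans_ne ha
  obtain ⟨y, hy⟩ := exists_isRoot_of_separable_map_constantCoeff (h_monic.map σ)
    (by rwa [h_monic.natDegree_map]) h_sep
  let ι : E⟦X⟧ →+* FractionRing E⟦X⟧ := algebraMap _ _
  have h_root : (f.map (ι.comp σ)).IsRoot (ι y) := by
    rw [← Polynomial.map_map]
    exact hy.map
  have h_inj : Function.Injective (ι.comp σ) :=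
    (IsFractionRing.injective E⟦X⟧ _).comp (expansionAt_injective a)
  obtain ⟨ψ, hψ⟩ := exists_ringHom_extending_of_root_minpoly hθ h_top h_inj h_root
  exact exists_ringHom_integralClosure_extending (σ := σ) hψ

end ExpansionOfIntegers

section PrincipalUnits

variable {R : Type*} [CommRing R]

/-- The quotient of a power series unit by its constant coefficient. -/
noncomputable def principalPart : R⟦X⟧ˣ →* R⟦X⟧ˣ :=
  MonoidHom.id _ / (Units.map (PowerSeries.C (R := R)).toMonoidHom).comp
    (Units.map (PowerSeries.constantCoeff (R := R)).toMonoidHom)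

theorem constantCoeff_principalPart (u : R⟦X⟧ˣ) :
    PowerSeries.constantCoeff (principalPart u : R⟦X⟧) = 1 := by
  have h : Units.map (PowerSeries.constantCoeff (R := R)).toMonoidHom (principalPart u) = 1 := by
    rw [principalPart, MonoidHom.div_apply, _root_.map_div, div_eq_one]
    ext
    simp
  exact congrArg Units.val h

theorem C_constantCoeff_mul_principalPart (u : R⟦X⟧ˣ) :
    PowerSeries.C (PowerSeries.constantCoeff (u : R⟦X⟧)) * principalPart u = u :=
  congrArg Units.val (mul_div_cancel (Units.map (PowerSeries.C (R := R)).toMonoidHom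
    (Units.map (PowerSeries.constantCoeff (R := R)).toMonoidHom u)) u)

theorem principalPart_eq_one {u : R⟦X⟧ˣ} {z : R} (h : (u : R⟦X⟧) = PowerSeries.C z) :
    principalPart u = 1 := by
  rw [principalPart, MonoidHom.div_apply, div_eq_one]
  ext1
  simp [h]

/-- The multiples `z * ∏ i, η i ^ b i` with `z ∈ Z`. Sums of `N` of them form the pointwise
multiple `N • scaledPowerProducts Z η`. -/
def scaledPowerProducts {ι : Type*} [Fintype ι] (Z : Set R) (η : ι → R⟦X⟧ˣ) : Set R⟦X⟧ :=
  {f | ∃ z ∈ Z, ∃ b : ι → ℤ, f = PowerSeries.C z * ((∏ i, η i ^ b i : R⟦X⟧ˣ) : R⟦X⟧)}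

theorem mem_nsmul_scaledPowerProducts {ι : Type*} [Fintype ι] {Z : Set R} {η : ι → R⟦X⟧ˣ}
    {N : ℕ} {f : R⟦X⟧} : f ∈ N • scaledPowerProducts Z η ↔
      ∃ z : Fin N → R, (∀ l, z l ∈ Z) ∧ ∃ b : Fin N → ι → ℤ,
        f = ∑ l, PowerSeries.C (z l) * ((∏ i, η i ^ b l i : R⟦X⟧ˣ) : R⟦X⟧) := by
  rw [Set.mem_nsmul]
  constructor
  · rintro ⟨g, rfl⟩
    choose z hz b hb using fun l => (g l).2
    exact ⟨z, hz, b, by rw [List.sum_ofFn]; exact Finset.sum_congr rfl fun l _ => hb l⟩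
  · rintro ⟨z, hz, b, rfl⟩
    exact ⟨fun l => ⟨_, z l, hz l, b l, rfl⟩, List.sum_ofFn⟩

theorem principalPart_prod_zpow {ι : Type*} [Fintype ι] {w : R⟦X⟧ˣ} {z : R}
    (hw : (w : R⟦X⟧) = PowerSeries.C z) (v : ι → R⟦X⟧ˣ) (a : ι → ℤ) :
    principalPart (w * ∏ i, v i ^ a i) = ∏ i, principalPart (v i) ^ a i := by
  simp only [map_mul, principalPart_eq_one hw, one_mul, map_prod, map_zpow]

end PrincipalUnits

theorem exists_algebraMap_eq_of_isIntegral {k S : Type*} [Field k] [IsAlgClosed k] [CommRing S]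
    [IsDomain S] [Algebra k S] {x : S} (hx : IsIntegral k x) : ∃ z, algebraMap k S z = x := by
  obtain ⟨z, hz⟩ := (IsAlgClosed.algebraMap_bijective_of_isIntegral
    (k := k) (K := integralClosure k S)).2 ⟨x, hx⟩
  exact ⟨z, congrArg Subtype.val hz⟩

section LogarithmicDerivative

/-- The logarithmic derivative `u ↦ D u / u` on units. -/
def unitsLogDeriv {R A : Type*} [CommRing R] [CommRing A] [Algebra R A] (D : Derivation R A A) :
    Aˣ →* Multiplicative A where
  toFun u := Multiplicative.ofAdd (↑u⁻¹ * D u)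
  map_one' := by simp
  map_mul' u v := by
    rw [← ofAdd_add, mul_inv, Units.val_mul, Units.val_mul, Derivation.leibniz, smul_eq_mul,
      smul_eq_mul]
    congr 1
    linear_combination (↑v⁻¹ * D v) * u.inv_mul + (↑u⁻¹ * D u) * v.inv_mul

theorem derivation_prod_zpow_s1 {R A ι : Type*} [CommRing R] [CommRing A] [Algebra R A] [Fintype ι]
    (D : Derivation R A A) (η : ι → Aˣ) (b : ι → ℤ) :
    D (∏ i, η i ^ b i : Aˣ) =
      (∏ i, η i ^ b i : Aˣ) * ∑ i, b i • (unitsLogDeriv D (η i)).toAdd := by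
  have h : (unitsLogDeriv D (∏ i, η i ^ b i)).toAdd =
      ∑ i, b i • (unitsLogDeriv D (η i)).toAdd := by
    simp only [map_prod, map_zpow, toAdd_prod, toAdd_zpow]
  rw [← h]
  exact (Units.mul_inv_cancel_left _ _).symm

end LogarithmicDerivative

section CoefficientsOfPowerProducts

variable {E : Type*} [Field E] {ι : Type*} [Fintype ι] {η : ι → E⟦X⟧ˣ}

theorem constantCoeff_prod_zpow (hη : ∀ i, PowerSeries.constantCoeff (η i : E⟦X⟧) = 1)
    (b : ι → ℤ) : PowerSeries.constantCoeff ((∏ i, η i ^ b i : E⟦X⟧ˣ) : E⟦X⟧) = 1 := by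
  have h_one (i : ι) : Units.map (PowerSeries.constantCoeff (R := E)).toMonoidHom (η i) = 1 :=
    Units.ext (hη i)
  have h : Units.map (PowerSeries.constantCoeff (R := E)).toMonoidHom (∏ i, η i ^ b i) = 1 := by
    simp only [map_prod, map_zpow, h_one, one_zpow, Finset.prod_const_one]
  exact congrArg Units.val h

-- The logarithmic derivative yields a recursion for the coefficients that is linear in `b`.
theorem exists_coeff_prod_zpow_eq_eval [CharZero E]
    (hη : ∀ i, PowerSeries.constantCoeff (η i : E⟦X⟧) = 1) (j : ℕ) :
    ∃ Q : MvPolynomial ι E, ∀ b : ι → ℤ,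
      PowerSeries.coeff j ((∏ i, η i ^ b i : E⟦X⟧ˣ) : E⟦X⟧) =
        MvPolynomial.eval (fun i => (b i : E)) Q := by
  induction j using Nat.strong_induction_on with
  | _ j ih =>
    rcases j with _ | j
    · exact ⟨1, fun b => by simpa using constantCoeff_prod_zpow hη b⟩
    choose! Q hQ using ih
    let ℓ (i : ι) : E⟦X⟧ := (unitsLogDeriv (PowerSeries.derivative E) (η i)).toAdd
    refine ⟨MvPolynomial.C ((j + 1 : E)⁻¹) * ∑ n ∈ Finset.HasAntidiagonal.antidiagonal j, Q n.1 *
      ∑ i, MvPolynomial.X i * MvPolynomial.C (PowerSeries.coeff n.2 (ℓ i)), fun b => ?_⟩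
    have h := congrArg (PowerSeries.coeff j)
      (derivation_prod_zpow_s1 (PowerSeries.derivative E) η b)
    rw [PowerSeries.coeff_derivative, PowerSeries.coeff_mul] at h
    have hj : (j + 1 : E) ≠ 0 := by exact_mod_cast j.succ_ne_zero
    rw [map_mul, MvPolynomial.eval_C, eq_inv_mul_iff_mul_eq₀ hj, mul_comm, h, map_sum]
    refine Finset.sum_congr rfl fun n hn => ?_
    have h_coeff : PowerSeries.coeff n.2 (∑ i, b i • ℓ i) =
        ∑ i, (b i : E) * PowerSeries.coeff n.2 (ℓ i) := by
      rw [map_sum]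
      exact Finset.sum_congr rfl fun i _ => by rw [map_zsmul, zsmul_eq_mul]
    have h_lt : n.1 < j + 1 :=
      Nat.lt_succ_of_le (Finset.HasAntidiagonal.mem_antidiagonal.mp hn ▸ Nat.le_add_right _ _)
    rw [h_coeff, hQ n.1 h_lt]
    simp only [map_sum, map_mul, MvPolynomial.eval_X, MvPolynomial.eval_C]

theorem X_pow_dvd_prod_zpow_sub_prod_zpow {p e : ℕ} [ExpChar E p]
    (hη : ∀ i, PowerSeries.constantCoeff (η i : E⟦X⟧) = 1) {b b' : ι → ℤ}
    (h : ∀ i, b i ≡ b' i [ZMOD (p ^ e : ℕ)]) : (PowerSeries.X : E⟦X⟧) ^ p ^ e ∣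
      ((∏ i, η i ^ b i : E⟦X⟧ˣ) : E⟦X⟧) - ((∏ i, η i ^ b' i : E⟦X⟧ˣ) : E⟦X⟧) := by
  have : ExpChar E⟦X⟧ p := expChar_of_injective_algebraMap (FaithfulSMul.algebraMap_injective E _) p
  let π := Ideal.Quotient.mk (Ideal.span {(PowerSeries.X : E⟦X⟧) ^ p ^ e})
  have h_order (i : ι) : Units.map π.toMonoidHom (η i) ^ p ^ e = 1 := by
    have h_dvd : (PowerSeries.X : E⟦X⟧) ∣ η i - 1 := by
      rw [PowerSeries.X_dvd_iff, map_sub, hη, map_one, sub_self]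
    have h_pow : π (η i ^ p ^ e) = π 1 := by
      rw [Ideal.Quotient.eq, Ideal.mem_span_singleton, ← one_pow (p ^ e), ← sub_pow_expChar_pow]
      exact pow_dvd_pow_of_dvd h_dvd _
    ext
    rw [Units.val_pow_eq_pow_val]
    exact ((map_pow π _ _).symm.trans h_pow).trans (map_one π)
  have h_prod : Units.map π.toMonoidHom (∏ i, η i ^ b i) =
      Units.map π.toMonoidHom (∏ i, η i ^ b' i) := by
    simp only [map_prod, map_zpow]
    refine Finset.prod_congr rfl fun i _ => zpow_eq_zpow_iff_modEq.mpr ?_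
    exact (h i).of_dvd (by exact_mod_cast orderOf_dvd_of_pow_eq_one (h_order i))
  rw [← Ideal.mem_span_singleton, ← Ideal.Quotient.eq]
  exact congrArg Units.val h_prod

/-- In characteristic zero one family of polynomials suffices. In characteristic `p` the first
`p ^ e` coefficients are constant on residue classes of `b` modulo `p ^ e`. -/
theorem exists_finite_coeff_prod_zpow_eq_eval (p : ℕ) [ExpChar E p]
    (hη : ∀ i, PowerSeries.constantCoeff (η i : E⟦X⟧) = 1) (M : ℕ) :
    ∃ 𝒬 : Set (ℕ → MvPolynomial ι E), 𝒬.Finite ∧ ∀ b : ι → ℤ, ∃ Q ∈ 𝒬, ∀ j < M,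
      PowerSeries.coeff j ((∏ i, η i ^ b i : E⟦X⟧ˣ) : E⟦X⟧) =
        MvPolynomial.eval (fun i => (b i : E)) (Q j) := by
  rcases ‹ExpChar E p› with _ | hp
  · choose Q hQ using exists_coeff_prod_zpow_eq_eval hη
    exact ⟨{Q}, Set.finite_singleton Q, fun b => ⟨Q, rfl, fun j _ => hQ j b⟩⟩
  · have : NeZero (p ^ M) := ⟨pow_ne_zero M hp.ne_zero⟩
    have : Fact p.Prime := ⟨hp⟩
    refine ⟨Set.range fun (b : ι → ZMod (p ^ M)) j => MvPolynomial.C (PowerSeries.coeff j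
      ((∏ i, η i ^ ((b i).val : ℤ) : E⟦X⟧ˣ) : E⟦X⟧)), Set.finite_range _, fun b =>
      ⟨_, ⟨fun i => b i, rfl⟩, fun j hj => ?_⟩⟩
    have h_modEq (i : ι) : b i ≡ ((b i : ZMod (p ^ M)).val : ℤ) [ZMOD (p ^ M : ℕ)] := by
      rw [← ZMod.intCast_eq_intCast_iff]
      simp
    have h_coeff := PowerSeries.X_pow_dvd_iff.mp (X_pow_dvd_prod_zpow_sub_prod_zpow hη h_modEq) j
      (hj.trans (Nat.lt_pow_self hp.one_lt))
    rw [MvPolynomial.eval_C]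
    rwa [map_sub, sub_eq_zero] at h_coeff

end CoefficientsOfPowerProducts

section AlgebraicRelations

variable {R σ ι : Type*} [CommRing R]

theorem eval_eval_eq_zero_of_aeval_eq_zero {G : ι → MvPolynomial σ R} {Φ : MvPolynomial ι R}
    (h : MvPolynomial.aeval G Φ = 0) (y : σ → R) :
    MvPolynomial.eval (fun i => MvPolynomial.eval y (G i)) Φ = 0 := by
  have h_comp := MvPolynomial.comp_aeval_apply G (MvPolynomial.aeval y) Φ
  rw [h, map_zero] at h_comp
  simpa only [MvPolynomial.aeval_eq_eval] using h_comp.symm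

variable [IsDomain R] [Fintype σ] [Fintype ι]

theorem exists_aeval_eq_zero_of_card_lt
    (h : Fintype.card σ < Fintype.card ι) (G : ι → MvPolynomial σ R) :
    ∃ Φ : MvPolynomial ι R, Φ ≠ 0 ∧ MvPolynomial.aeval G Φ = 0 := by
  have h_dep : ¬ AlgebraicIndependent R G := fun h_indep => by
    have h_card := h_indep.lift_cardinalMk_le_trdeg
    rw [MvPolynomial.trdeg_of_isDomain, Cardinal.mk_fintype, Cardinal.mk_fintype] at h_card
    simp only [Cardinal.lift_natCast, Nat.cast_le] at h_card
    exact h.not_ge h_card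
  simpa only [algebraicIndependent_iff, not_forall, exists_prop, and_comm] using h_dep

theorem exists_forall_aeval_eq_zero_of_card_lt
    (h : Fintype.card σ < Fintype.card ι) {𝒢 : Set (ι → MvPolynomial σ R)} (h𝒢 : 𝒢.Finite) :
    ∃ Φ : MvPolynomial ι R, Φ ≠ 0 ∧ ∀ G ∈ 𝒢, MvPolynomial.aeval G Φ = 0 := by
  choose Φ hΦ0 hΦ using exists_aeval_eq_zero_of_card_lt (R := R) h
  refine ⟨∏ G ∈ h𝒢.toFinset, Φ G, Finset.prod_ne_zero_iff.mpr fun G _ => hΦ0 G, fun G hG => ?_⟩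
  rw [map_prod]
  exact Finset.prod_eq_zero (h𝒢.mem_toFinset.mpr hG) (hΦ G)

end AlgebraicRelations

theorem exists_relation_coeff_nsmul_scaledPowerProducts {E ι : Type*} [Field E] [Fintype ι]
    (p : ℕ) [ExpChar E p] {η : ι → E⟦X⟧ˣ}
    (hη : ∀ i, PowerSeries.constantCoeff (η i : E⟦X⟧) = 1) (N : ℕ) (Z : Set E) :
    ∃ m : ℕ, ∀ idx : Fin m → ℕ, ∃ Φ : MvPolynomial (Fin m) E, Φ ≠ 0 ∧
      ∀ f ∈ N • scaledPowerProducts Z η,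
        MvPolynomial.eval (fun j => PowerSeries.coeff (idx j) f) Φ = 0 := by
  refine ⟨Fintype.card (Fin N × Option ι) + 1, fun idx => ?_⟩
  obtain ⟨𝒬, h𝒬, hQ⟩ :=
    exists_finite_coeff_prod_zpow_eq_eval p hη (Finset.univ.sup idx + 1)
  have := h𝒬.to_subtype
  let G (q : Fin N → 𝒬) (j : Fin _) : MvPolynomial (Fin N × Option ι) E :=
    ∑ l, MvPolynomial.X (l, none) *
      MvPolynomial.rename (fun i => (l, some i)) ((q l : ℕ → MvPolynomial ι E) (idx j))
  obtain ⟨Φ, hΦ0, hΦ⟩ := exists_forall_aeval_eq_zero_of_card_lt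
    (by rw [Fintype.card_fin]; exact Nat.lt_succ_self _) (Set.finite_range G)
  refine ⟨Φ, hΦ0, fun f hf => ?_⟩
  obtain ⟨z, -, b, rfl⟩ := mem_nsmul_scaledPowerProducts.mp hf
  choose q hq h_coeff using fun l => hQ (b l)
  let y (v : Fin N × Option ι) : E := v.2.elim (z v.1) fun i => b v.1 i
  have hy (j : Fin _) : PowerSeries.coeff (idx j)
      (∑ l, PowerSeries.C (z l) * ((∏ i, η i ^ b l i : E⟦X⟧ˣ) : E⟦X⟧)) =
        MvPolynomial.eval y (G (fun l => ⟨q l, hq l⟩) j) := by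
    have h_lt : idx j < Finset.univ.sup idx + 1 :=
      Nat.lt_succ_of_le (Finset.le_sup (Finset.mem_univ j))
    rw [map_sum, map_sum]
    refine Finset.sum_congr rfl fun l _ => ?_
    rw [PowerSeries.coeff_C_mul, h_coeff l _ h_lt, map_mul, MvPolynomial.eval_X,
      MvPolynomial.eval_rename]
    rfl
  simp only [hy]
  exact eval_eval_eq_zero_of_aeval_eq_zero (hΦ _ ⟨_, rfl⟩) y

section LargeFields

theorem coeff_pow_expChar_pow {R : Type*} [CommRing R] (p : ℕ) [ExpChar R p] (g j : ℕ) (f : R⟦X⟧) :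
    PowerSeries.coeff (p ^ g * j) (f ^ p ^ g) = PowerSeries.coeff j f ^ p ^ g := by
  have hp : p ≠ 0 := expChar_ne_zero R p
  have h_expand : PowerSeries.map (iterateFrobenius R p g)
      (PowerSeries.expand (p ^ g) (pow_ne_zero g hp) f) = f ^ p ^ g :=
    MvPowerSeries.map_iterateFrobenius_expand p hp f g
  rw [← h_expand, PowerSeries.coeff_map, PowerSeries.coeff_expand_mul, iterateFrobenius_def]

variable {K E : Type*} [Field K] [Field E] [Algebra K E] {ι : Type*} [Fintype ι] {η : ι → E⟦X⟧ˣ}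

theorem exists_eval_algebraMap_pow_ne_zero [Infinite K] (p : ℕ) [ExpChar E p] (g : ℕ)
    {m : Type*} {Φ : MvPolynomial m E} (hΦ : Φ ≠ 0) :
    ∃ x : m → K, MvPolynomial.eval (fun j => algebraMap K E (x j) ^ p ^ g) Φ ≠ 0 := by
  by_contra! h
  let frob (x : K) : E := algebraMap K E x ^ p ^ g
  have h_inj : Function.Injective frob :=
    (iterateFrobenius_inj E p g).comp (algebraMap K E).injective
  refine hΦ (MvPolynomial.funext_set (fun _ => Set.range frob)
    (fun _ => Set.infinite_range_of_injective h_inj) fun y hy => ?_)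
  choose x hx using fun j => hy j (Set.mem_univ j)
  rw [map_zero, ← h x]
  exact congrArg (MvPolynomial.eval · Φ) (funext hx).symm

/-- The coefficients of index divisible by `p ^ g` of a `p ^ g`-th power are Zariski dense,
whereas those of a sum of `N` multiples of power products satisfy an algebraic relation. -/
theorem exists_expansionAt_pow_notMem_of_infinite [Infinite K] (p : ℕ) [ExpChar E p]
    (hη : ∀ i, PowerSeries.constantCoeff (η i : E⟦X⟧) = 1) (g N : ℕ) (Z : Set E)
    (k : K) :
    ∃ r : K[X], expansionAt K (algebraMap K E k) r ^ p ^ g ∉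
      N • scaledPowerProducts Z η := by
  classical
  obtain ⟨m, hm⟩ := exists_relation_coeff_nsmul_scaledPowerProducts p hη N Z
  obtain ⟨Φ, hΦ0, hΦ⟩ := hm fun j => p ^ g * j
  obtain ⟨x, hx⟩ := exists_eval_algebraMap_pow_ne_zero (K := K) p g hΦ0
  refine ⟨taylor (-k) (ofFn m x), fun h_mem => hx ?_⟩
  rw [← hΦ _ h_mem]
  congr 2 with j
  rw [coeff_pow_expChar_pow, coeff_expansionAt_algebraMap, taylor_taylor, add_neg_cancel,
    taylor_zero, ofFn_coeff_eq_val_of_lt x j.2]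

end LargeFields

section FiniteFields

theorem exists_const_mul_pow_lt_two_pow {p : ℕ} (hp : 1 < p) (D n : ℕ) :
    ∃ f : ℕ, D * (p ^ f) ^ n < 2 ^ p ^ f := by
  have h_tendsto := tendsto_pow_const_div_const_pow_of_one_lt n (r := (2 : ℝ)) one_lt_two
  have h_lt := h_tendsto.eventually_lt_const (u := 1 / (D + 1 : ℝ)) (by positivity)
  obtain ⟨f, hf⟩ := ((tendsto_pow_atTop_atTop_of_one_lt hp).eventually h_lt).exists
  refine ⟨f, ?_⟩
  rw [div_lt_div_iff₀ (by positivity) (by positivity), one_mul] at hf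
  have h_nat : (p ^ f) ^ n * (D + 1) < 2 ^ p ^ f := by exact_mod_cast hf
  nlinarith [Nat.zero_le ((p ^ f) ^ n)]

theorem one_lt_expChar_of_finite (K : Type*) [Field K] [Finite K] (p : ℕ) [ExpChar K p] :
    1 < p := by
  rcases ‹ExpChar K p› with _ | hp
  · exact (not_finite K).elim
  · exact hp.one_lt

variable {K E : Type*} [Field K] [Field E] [Algebra K E] {ι : Type*} [Fintype ι] {η : ι → E⟦X⟧ˣ}

theorem exists_X_pow_dvd_sub_of_eq {p : ℕ} [ExpChar E p]
    (hη : ∀ i, PowerSeries.constantCoeff (η i : E⟦X⟧) = 1) (N e : ℕ) (Z : Set E) :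
    ∃ κ : ↥(N • scaledPowerProducts Z η) → Fin N → Z × (ι → ZMod (p ^ e)),
      ∀ f f', κ f = κ f' → PowerSeries.X ^ p ^ e ∣ (f - f' : E⟦X⟧) := by
  choose z hz b hb using fun f : ↥(N • scaledPowerProducts Z η) =>
    mem_nsmul_scaledPowerProducts.mp f.2
  refine ⟨fun f l => (⟨z f l, hz f l⟩, fun i => b f l i), fun f f' h => ?_⟩
  rw [hb f, hb f', ← Finset.sum_sub_distrib]
  refine Finset.dvd_sum fun l _ => ?_
  have h_z : z f l = z f' l := congrArg (fun v => (v l).1.1) h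
  have h_b (i : ι) : (b f l i : ZMod (p ^ e)) = b f' l i := congrArg (fun v => (v l).2 i) h
  rw [h_z, ← mul_sub]
  exact (X_pow_dvd_prod_zpow_sub_prod_zpow hη fun i =>
    (ZMod.intCast_eq_intCast_iff _ _ _).mp (h_b i)).mul_left _

theorem card_pow_le_of_forall_expansionAt_pow_mem (p : ℕ) [ExpChar E p]
    (hη : ∀ i, PowerSeries.constantCoeff (η i : E⟦X⟧) = 1) {g N : ℕ} {a : E} {Z : Set E}
    (hZ : Z.Finite) (h : ∀ r : K[X], expansionAt K a r ^ p ^ g ∈ N • scaledPowerProducts Z η)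
    (f : ℕ) :
    Nat.card K ^ p ^ f ≤ (Nat.card Z * (p ^ (g + f)) ^ Fintype.card ι) ^ N := by
  classical
  have : ExpChar E⟦X⟧ p := expChar_of_injective_algebraMap (FaithfulSMul.algebraMap_injective E _) p
  have : NeZero (p ^ (g + f)) := ⟨pow_ne_zero _ (expChar_ne_zero E p)⟩
  have := hZ.to_subtype
  obtain ⟨κ, hκ⟩ := exists_X_pow_dvd_sub_of_eq (p := p) hη N (g + f) Z
  let class_of (x : Fin (p ^ f) → K) := κ ⟨_, h (ofFn (p ^ f) x)⟩
  have h_inj : Function.Injective class_of := fun x y hxy => by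
    have h_dvd := hκ _ _ hxy
    rw [← sub_pow_expChar_pow, ← map_sub, add_comm, pow_add, pow_mul,
      IsIntegrallyClosed.pow_dvd_pow_iff (pow_ne_zero _ (expChar_ne_zero E p)), ← map_sub]
      at h_dvd
    have h_zero := eq_zero_of_X_pow_dvd_expansionAt (ofFn_degree_lt (x - y)) h_dvd
    exact sub_eq_zero.mp (injective_ofFn _ (by simpa using h_zero))
  have h_card := Nat.card_le_card_of_injective class_of h_inj
  simpa only [Nat.card_fun, Nat.card_prod, Nat.card_zmod, Nat.card_fin,
    Nat.card_eq_fintype_card (α := ι)] using h_card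

theorem exists_expansionAt_pow_notMem_of_finite [Finite K] (p : ℕ) [ExpChar E p]
    (hη : ∀ i, PowerSeries.constantCoeff (η i : E⟦X⟧) = 1) (g N : ℕ) (a : E) {Z : Set E}
    (hZ : Z.Finite) : ∃ r : K[X], expansionAt K a r ^ p ^ g ∉ N • scaledPowerProducts Z η := by
  by_contra! h
  have : ExpChar K p := (algebraMap K E).expChar (algebraMap K E).injective p
  let n := Fintype.card ι * N
  obtain ⟨f, hf⟩ := exists_const_mul_pow_lt_two_pow (one_lt_expChar_of_finite K p)
    (Nat.card Z ^ N * (p ^ g) ^ n) n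
  refine hf.not_ge ?_
  calc 2 ^ p ^ f ≤ Nat.card K ^ p ^ f := Nat.pow_le_pow_left Finite.one_lt_card _
    _ ≤ (Nat.card Z * (p ^ (g + f)) ^ Fintype.card ι) ^ N :=
      card_pow_le_of_forall_expansionAt_pow_mem p hη hZ h f
    _ = Nat.card Z ^ N * (p ^ g) ^ n * (p ^ f) ^ n := by
      rw [mul_pow, ← pow_mul, pow_add, mul_pow, mul_assoc]

theorem finite_range_comp_algebraMap {R S T : Type*} [CommRing R] [CommRing S] [CommRing T]
    [Algebra R S] [Module.Finite R S] (f : S →+* T)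
    (h : (Set.range (f.comp (algebraMap R S))).Finite) : (Set.range f).Finite := by
  obtain ⟨n, s, hs⟩ := Module.Finite.exists_fin (R := R) (M := S)
  have := h.to_subtype
  refine (Set.finite_range fun c : Fin n → Set.range (f.comp (algebraMap R S)) =>
    ∑ i, (c i : T) * f (s i)).subset ?_
  rintro _ ⟨x, rfl⟩
  obtain ⟨c, rfl⟩ := (Submodule.mem_span_range_iff_exists_fun R).mp (hs ▸ Submodule.mem_top : x ∈ _)
  exact ⟨fun i => ⟨_, c i, rfl⟩, by simp [Algebra.smul_def]⟩

theorem finite_range_aeval [Finite K] {a : E} (ha : IsIntegral K a) :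
    (Set.range (aeval (R := K) a)).Finite := by
  have : Module.Finite K (Algebra.adjoin K {a}) := Module.Finite.iff_fg.mpr ha.fg_adjoin_singleton
  have : Finite (Algebra.adjoin K {a}) := Module.finite_of_finite K
  rw [← AlgHom.coe_range, ← Algebra.adjoin_singleton_eq_range_aeval]
  exact Set.toFinite _

end FiniteFields

theorem sum_mem_nsmul {M : Type*} [AddCommMonoid M] {T : Set M} (h_zero : 0 ∈ T) {k N : ℕ}
    (hk : k ≤ N) {f : Fin k → M} (hf : ∀ i, f i ∈ T) : ∑ i, f i ∈ N • T :=
  Set.nsmul_subset_nsmul_right h_zero hk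
    (Set.mem_nsmul.mpr ⟨fun i => ⟨f i, hf i⟩, List.sum_ofFn⟩)

section SumsOfUnits

variable {K L E : Type*} [Field K] [Field L] [Field E] [Algebra (RatFunc K) L]
  [Algebra K[X] L] [IsScalarTower K[X] (RatFunc K) L] [FiniteDimensional (RatFunc K) L]
  [Algebra.IsSeparable (RatFunc K) L] [Algebra K E]
  {a : E} {φ : integralClosure K[X] L →+* E⟦X⟧}

theorem exists_forall_unit_mem_scaledPowerProducts [IsAlgClosed E]
    (hφ : ∀ r, φ (algebraMap K[X] _ r) = expansionAt K a r) :
    ∃ (s : ℕ) (η : Fin s → E⟦X⟧ˣ), (∀ i, PowerSeries.constantCoeff (η i : E⟦X⟧) = 1) ∧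
      ∀ u : (integralClosure K[X] L)ˣ,
        φ u ∈ scaledPowerProducts (Set.range (PowerSeries.constantCoeff.comp φ)) η := by
  obtain ⟨s, ε, hε⟩ := exists_fin_generators_units_modulo_isIntegralElem_C K L
  let ψ := Units.map φ.toMonoidHom
  refine ⟨s, fun i => principalPart (ψ (ε i)), fun i => constantCoeff_principalPart _,
    fun u => ⟨_, ⟨u, rfl⟩, ?_⟩⟩
  obtain ⟨c, b, hu, q, hq, hqc⟩ := hε u
  have h_const : φ.comp ((algebraMap K[X] (integralClosure K[X] L)).comp C) =
      (algebraMap E E⟦X⟧).comp (algebraMap K E) :=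
    RingHom.ext fun k => (hφ (C k)).trans (expansionAt_C a k)
  have h_integral : IsIntegral E (φ c) :=
    ⟨q.map (algebraMap K E), hq.map _, by
      rw [eval₂_map, ← h_const, ← hom_eval₂, hqc, map_zero]⟩
  obtain ⟨z, hz⟩ := exists_algebraMap_eq_of_isIntegral h_integral
  have h_principal : principalPart (ψ u) = ∏ i, principalPart (ψ (ε i)) ^ b i := by
    rw [hu, map_mul, map_prod]
    simp only [map_zpow]
    exact principalPart_prod_zpow hz.symm _ _
  refine ⟨b, ?_⟩
  rw [← h_principal]
  exact (C_constantCoeff_mul_principalPart (ψ u)).symm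

theorem finite_range_constantCoeff_comp [Finite K] (ha : IsIntegral K a)
    (hφ : ∀ r, φ (algebraMap K[X] _ r) = expansionAt K a r) :
    (Set.range (PowerSeries.constantCoeff.comp φ)).Finite := by
  have : Module.Finite K[X] (integralClosure K[X] L) :=
    IsIntegralClosure.finite K[X] (RatFunc K) L _
  refine finite_range_comp_algebraMap (R := K[X]) _ ((finite_range_aeval ha).subset ?_)
  rintro _ ⟨r, rfl⟩
  exact ⟨r, by rw [← constantCoeff_expansionAt, ← hφ]; rfl⟩

theorem exists_ringHom_forall_pow_notMem_scaledPowerProducts (K L E : Type*) [Field K] [Field L]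
    [Algebra (RatFunc K) L] [Algebra K[X] L] [IsScalarTower K[X] (RatFunc K) L]
    [FiniteDimensional (RatFunc K) L] [Algebra.IsSeparable (RatFunc K) L]
    [Field E] [Algebra K E] [Algebra.IsAlgebraic K E] [IsAlgClosed E] (p : ℕ) [ExpChar E p]
    (g N : ℕ) :
    ∃ φ : integralClosure K[X] L →+* E⟦X⟧, (∃ a, ∀ r, φ (algebraMap K[X] _ r) = expansionAt K a r) ∧
      ∀ {s : ℕ} {η : Fin s → E⟦X⟧ˣ}, (∀ i, PowerSeries.constantCoeff (η i : E⟦X⟧) = 1) →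
        ∃ r : K[X], φ (algebraMap K[X] _ r) ^ p ^ g ∉
          N • scaledPowerProducts (Set.range (PowerSeries.constantCoeff.comp φ)) η := by
  have h_extends := eventually_cofinite_exists_ringHom_extending_expansionAt K L E
  rcases finite_or_infinite K with _ | _
  · have : Infinite E := IsAlgClosed.instInfinite
    obtain ⟨a, φ, hφ⟩ := h_extends.exists
    refine ⟨φ, ⟨a, hφ⟩, fun hη => ?_⟩
    simp only [hφ]
    exact exists_expansionAt_pow_notMem_of_finite p hη g N a
      (finite_range_constantCoeff_comp (Algebra.IsIntegral.isIntegral a) hφ)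
  · obtain ⟨k, φ, hφ⟩ :=
      ((algebraMap K E).injective.tendsto_cofinite.eventually h_extends).exists
    refine ⟨φ, ⟨_, hφ⟩, fun hη => ?_⟩
    simp only [hφ]
    exact exists_expansionAt_pow_notMem_of_infinite p hη g N _ k

theorem exists_forall_pow_ne_sum_units (K L : Type*) [Field K] [Field L]
    [Algebra (RatFunc K) L] [Algebra K[X] L] [IsScalarTower K[X] (RatFunc K) L]
    [FiniteDimensional (RatFunc K) L] [Algebra.IsSeparable (RatFunc K) L]
    (p : ℕ) [ExpChar K p] (g N : ℕ) :
    ∃ r : K[X], ∀ k ≤ N, ∀ y : Fin k → (integralClosure K[X] L)ˣ,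
      algebraMap K[X] (integralClosure K[X] L) r ^ p ^ g ≠
        ∑ i, (y i : integralClosure K[X] L) := by
  let E := AlgebraicClosure K
  have : ExpChar E p := expChar_of_injective_algebraMap (algebraMap K E).injective p
  obtain ⟨φ, ⟨a, hφ⟩, h_notMem⟩ :=
    exists_ringHom_forall_pow_notMem_scaledPowerProducts K L E p g N
  obtain ⟨s, η, hη, h_units⟩ := exists_forall_unit_mem_scaledPowerProducts hφ
  obtain ⟨r, hr⟩ := h_notMem hη
  refine ⟨r, fun k hk y h => hr ?_⟩
  rw [← map_pow, h, map_sum]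
  have h_zero : 0 ∈ scaledPowerProducts (Set.range (PowerSeries.constantCoeff.comp φ)) η :=
    ⟨0, ⟨0, map_zero _⟩, 0, by rw [map_zero, zero_mul]⟩
  exact sum_mem_nsmul h_zero hk fun i => h_units (y i)

end SumsOfUnits

section InseparableDescent

theorem exists_ringHom_integralClosure_pow_expChar_pow (R L F : Type*) [CommRing R] [Field L]
    [Field F] [Algebra R L] [Algebra L F] [Algebra R F] [IsScalarTower R L F]
    [IsPurelyInseparable.HasExponent L F] (p : ℕ) [ExpChar L p] :
    ∃ (g : ℕ) (ψ : integralClosure R F →+* integralClosure R L),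
      ∀ r, ψ (algebraMap R _ r) = algebraMap R _ r ^ p ^ g := by
  let g := IsPurelyInseparable.exponent L F
  let frob : F →+* L := IsPurelyInseparable.iterateFrobenius L F p le_rfl
  have h_frob (x : F) : algebraMap L F (frob x) = x ^ p ^ g :=
    IsPurelyInseparable.algebraMap_iterateFrobenius L p le_rfl x
  have h_integral (x : integralClosure R F) : IsIntegral R (frob x) := by
    refine (isIntegral_algebraMap_iff (algebraMap L F).injective).mp ?_
    rw [h_frob]
    exact x.2.pow _
  refine ⟨g, (frob.comp (algebraMap (integralClosure R F) F)).codRestrict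
    (integralClosure R L) h_integral, fun r => Subtype.ext ((algebraMap L F).injective ?_)⟩
  refine (h_frob _).trans ?_
  simp [← IsScalarTower.algebraMap_apply]

end InseparableDescent

theorem sums_of_units_integral_closure_general
    (K F : Type*) [Field K] [Field F]
    [Algebra (RatFunc K) F] [FiniteDimensional (RatFunc K) F]
    [Algebra (Polynomial K) F] [IsScalarTower (Polynomial K) (RatFunc K) F] (N : ℕ) :
    ∃ r : Polynomial K,
      ¬ ∃ (k : ℕ) (e : Fin k → F), k ≤ N ∧
        (∀ i, e i ∈ integralClosure (Polynomial K) F ∧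
          ∃ e' ∈ integralClosure (Polynomial K) F, e i * e' = 1) ∧
        algebraMap (Polynomial K) F r = ∑ i, e i := by
  obtain ⟨p, _⟩ := ExpChar.exists K
  let L := separableClosure (RatFunc K) F
  have : ExpChar L p :=
    expChar_of_injective_ringHom ((algebraMap (RatFunc K) L).comp (algebraMap K _)).injective p
  have : IsScalarTower K[X] L F := IsScalarTower.of_algebraMap_eq fun _ => rfl
  obtain ⟨g, ψ, hψ⟩ := exists_ringHom_integralClosure_pow_expChar_pow K[X] L F p
  obtain ⟨r, hr⟩ := exists_forall_pow_ne_sum_units K L p g N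
  refine ⟨r, fun ⟨k, e, hk, he, h_sum⟩ => ?_⟩
  choose h_mem e' h_mem' h_mul using he
  let u (i : Fin k) : (integralClosure K[X] F)ˣ := Units.mkOfMulEqOne ⟨e i, h_mem i⟩
    ⟨e' i, h_mem' i⟩ (Subtype.ext (h_mul i))
  have h_units : algebraMap K[X] (integralClosure K[X] F) r = ∑ i, (u i : integralClosure K[X] F) :=
    Subtype.ext (by simpa [u] using h_sum)
  refine hr k hk (fun i => Units.map ψ.toMonoidHom (u i)) ?_
  rw [← hψ, h_units, map_sum]
  rfl

/-- Let `K` be a perfect field and `F` a finite extension of the rational function field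
`K(x)`. For every positive integer `N` there is an element of the integral closure `O_F`
of `K[x]` in `F` that cannot be written as a sum of at most `N` units of `O_F`. -/
theorem sums_of_units_integral_closure
    (K F : Type*) [Field K] [PerfectField K] [Field F]
    [Algebra (RatFunc K) F] [FiniteDimensional (RatFunc K) F]
    [Algebra (Polynomial K) F] [IsScalarTower (Polynomial K) (RatFunc K) F]
    (N : ℕ) (hN : 0 < N) :
    ∃ r ∈ integralClosure (Polynomial K) F,
      ¬ ∃ (k : ℕ) (e : Fin k → F), 1 ≤ k ∧ k ≤ N ∧
        (∀ i, e i ∈ integralClosure (Polynomial K) F ∧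
          ∃ e' ∈ integralClosure (Polynomial K) F, e i * e' = 1) ∧
        r = ∑ i, e i :=
  let ⟨r, hr⟩ := sums_of_units_integral_closure_general K F N
  ⟨algebraMap _ F r, (integralClosure _ F).algebraMap_mem r,
    fun ⟨k, e, _, h⟩ => hr ⟨k, e, h⟩⟩
end

section
/- Let K be a finite field of odd characteristic and f ∈ K[X] a nonconstant squarefree (separable) polynomial. Let R := K[x][y] = K[X,Y]/(Y² − f(X)), which is the integral closure of K[x] in its fraction field F = K(x)(y). Then the following are equivalent: (a) every element of R is a finite sum of units of R, but for every positive integer N there exists an element of R that is not a sum of at most N units of R (i.e., u(R) = ω); (b) f has degree 2 and the leading coefficient of f is a square in K. -/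
/-- The unit sum number of `R` is `ω`: every element of `R` is a (nonempty) finite sum of
units, but for every positive `N` some element of `R` is not a sum of at most `N` units. -/
def UnitSumNumberOmega (R : Type*) [CommRing R] : Prop :=
  (∀ r : R, ∃ (k : ℕ) (e : Fin k → Rˣ), 1 ≤ k ∧ r = ∑ i, (e i : R)) ∧
  ∀ N : ℕ, 0 < N →
    ∃ r : R, ¬ ∃ (k : ℕ) (e : Fin k → Rˣ), 1 ≤ k ∧ k ≤ N ∧ r = ∑ i, (e i : R)

/-!
A unit `u = a + b√f` of `K[x][√f]` has constant norm `a² - f b²`. Take `u` with `b ≠ 0` and `deg a`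
minimal. For any other nonconstant unit `v`, one of `v u`, `v ū` has first coordinate of smaller
degree than that of `v`, so by descent every unit lies in the order `K[a] ⊕ K[a] b√f`. If the units
span, this order is the whole ring; then `x ∈ K[a]` forces `deg a = 1` and `√f` forces `b` to be
constant, so the norm equation reads `f = ℓ² - e` with `ℓ` linear and `e ≠ 0`.

Conversely `y² = ℓ² - e` is the hyperbola `(ℓ + y)(ℓ - y) = e`, whose coordinate ring is
`K[T;T⁻¹]`. There the units are monomials: they span, but a sum of `N` of them has at most `N`
terms.
-/

open Polynomial

section SumsOfUnits

variable {R S : Type*} [CommRing R] [CommRing S]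

lemma UnitSumNumberOmega.of_ringEquiv (φ : R ≃+* S) (hR : UnitSumNumberOmega R) :
    UnitSumNumberOmega S := by
  refine ⟨fun s => ?_, fun N hN => ?_⟩
  · obtain ⟨k, e, hk, he⟩ := hR.1 (φ.symm s)
    refine ⟨k, fun i => Units.map φ (e i), hk, ?_⟩
    simpa [he] using (φ.apply_symm_apply s).symm
  · obtain ⟨r, hr⟩ := hR.2 N hN
    refine ⟨φ r, fun ⟨k, e, hk, hkN, he⟩ => hr ⟨k, fun i => Units.map φ.symm (e i), hk, hkN, ?_⟩⟩
    simpa using congrArg φ.symm he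

lemma exists_eq_sum_units_iff_mem_closure {r : R} :
    (∃ (k : ℕ) (e : Fin k → Rˣ), 1 ≤ k ∧ r = ∑ i, (e i : R)) ↔
      r ∈ AddSubmonoid.closure {x : R | IsUnit x} := by
  constructor
  · rintro ⟨k, e, -, rfl⟩
    exact sum_mem fun i _ => AddSubmonoid.subset_closure (e i).isUnit
  · intro hr
    induction hr using AddSubmonoid.closure_induction with
    | mem x hx => exact ⟨1, fun _ => hx.unit, le_rfl, by simp⟩
    | zero => exact ⟨2, ![1, -1], one_le_two, by simp⟩
    | add x y _ _ hx hy =>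
      obtain ⟨k, e, hk, rfl⟩ := hx
      obtain ⟨l, e', -, rfl⟩ := hy
      exact ⟨k + l, Fin.append e e', by omega, by simp [Fin.sum_univ_add]⟩

lemma UnitSumNumberOmega.closure_isUnit_eq_top (hR : UnitSumNumberOmega R) :
    AddSubmonoid.closure {x : R | IsUnit x} = ⊤ :=
  (AddSubmonoid.eq_top_iff' _).2 fun r => exists_eq_sum_units_iff_mem_closure.1 (hR.1 r)

end SumsOfUnits

section Laurent

open LaurentPolynomial hiding C

lemma exists_eq_C_mul_T_of_isUnit {R : Type*} [CommRing R] [IsDomain R]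
    {u : R[T;T⁻¹]} (hu : IsUnit u) : ∃ (c : R) (n : ℤ), u = LaurentPolynomial.C c * T n := by
  obtain ⟨v, huv⟩ := hu.exists_right_inv
  obtain ⟨n, p, hp⟩ := exists_T_pow u
  obtain ⟨m, q, hq⟩ := exists_T_pow v
  have hpq : p * q = X ^ (n + m) := by
    apply toLaurent_injective
    rw [map_mul, hp, hq, toLaurent_X_pow, Nat.cast_add, T_add]
    linear_combination (T n * T m) * huv
  obtain ⟨i, -, w, hw⟩ := (dvd_prime_pow prime_X _).1 (Dvd.intro _ hpq)
  obtain ⟨c, -, hc⟩ := Polynomial.isUnit_iff.1 (w⁻¹).isUnit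
  have hpc : p = C c * X ^ i := by rw [hc, ← hw, mul_left_comm, Units.inv_mul, mul_one]
  refine ⟨c, i - n, ?_⟩
  calc u = toLaurent p * T (-n) := by rw [hp, mul_T_assoc, add_neg_cancel, T_zero, mul_one]
    _ = LaurentPolynomial.C c * T (i - n) := by
      rw [hpc, toLaurent_C_mul_X_pow, mul_T_assoc, sub_eq_add_neg]

lemma card_support_le_one_of_isUnit {R : Type*} [CommRing R] [IsDomain R]
    {u : R[T;T⁻¹]} (hu : IsUnit u) : u.coeff.support.card ≤ 1 := by
  obtain ⟨c, n, rfl⟩ := exists_eq_C_mul_T_of_isUnit hu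
  exact Finset.card_le_card (support_C_mul_T c n)

lemma card_support_sum_units_le {R : Type*} [CommRing R] [IsDomain R] {k : ℕ}
    (e : Fin k → R[T;T⁻¹]ˣ) : (∑ i, (e i : R[T;T⁻¹])).coeff.support.card ≤ k := by
  classical
  calc (∑ i, (e i : R[T;T⁻¹])).coeff.support.card
      ≤ (Finset.univ.biUnion fun i => (e i : R[T;T⁻¹]).coeff.support).card := by
        rw [AddMonoidAlgebra.coeff_sum]
        exact Finset.card_le_card Finsupp.support_finsetSum
    _ ≤ (Finset.univ : Finset (Fin k)).card * 1 := Finset.card_biUnion_le_card_mul _ _ _ fun i _ =>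
        card_support_le_one_of_isUnit (e i).isUnit
    _ = k := by simp

lemma unitSumNumberOmega_laurentPolynomial (K : Type*) [Field K] :
    UnitSumNumberOmega K[T;T⁻¹] := by
  refine ⟨fun p => exists_eq_sum_units_iff_mem_closure.2 ?_, fun N _ => ?_⟩
  · induction p using LaurentPolynomial.induction_on' with
    | add p q hp hq => exact add_mem hp hq
    | C_mul_T n c =>
      obtain rfl | hc := eq_or_ne c 0
      · simp
      · have hcu : IsUnit (LaurentPolynomial.C c) := (IsUnit.mk0 c hc).map LaurentPolynomial.C
        exact AddSubmonoid.subset_closure (hcu.mul (isUnit_T n))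
  · let p : K[X] := ∑ i : Fin (N + 1), C 1 * X ^ (i : ℕ)
    refine ⟨toLaurent p, fun ⟨k, e, _, hkN, he⟩ => ?_⟩
    have hp : p.support.card = N + 1 :=
      card_support_eq' _ _ Fin.val_injective fun _ => one_ne_zero
    have hk := card_support_sum_units_le e
    rw [← he, support_coeff_toLaurent, Finset.card_map, hp] at hk
    omega

lemma laurentPolynomial_ringHom_ext {R S : Type*} [CommSemiring R] [CommSemiring S]
    {φ ψ : R[T;T⁻¹] →+* S} (hC : ∀ r, φ (.C r) = ψ (.C r)) (hT : φ (T 1) = ψ (T 1)) : φ = ψ := by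
  refine IsLocalization.ringHom_ext (Submonoid.powers (X : R[X])) (Polynomial.ringHom_ext ?_ ?_)
  · exact fun r => by simpa using hC r
  · simpa using hT

end Laurent

/-- `A[√f]`, presented as `A[Y]/(Y² - f)`; `AdjoinRoot.root _` is the square root of `f`. -/
noncomputable abbrev AdjoinSqrt {A : Type*} [CommRing A] (f : A) : Type _ :=
  AdjoinRoot (X ^ 2 - C f)

lemma AdjoinSqrt.root_sq {A : Type*} [CommRing A] (f : A) :
    AdjoinRoot.root (X ^ 2 - C f) ^ 2 = AdjoinRoot.of (X ^ 2 - C f) f := by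
  have h := AdjoinRoot.mk_self (f := X ^ 2 - C f)
  rw [map_sub, map_pow, AdjoinRoot.mk_X, AdjoinRoot.mk_C] at h
  exact sub_eq_zero.1 h

section Hyperbola

open LaurentPolynomial hiding C eval₂_C

lemma two_mul_map_invOf_two {R A : Type*} [Semiring R] [Invertible (2 : R)] [Semiring A]
    (φ : R →+* A) : 2 * φ ⅟2 = 1 := by
  rw [← map_ofNat φ, ← map_mul, mul_invOf_self, map_one]

lemma map_units_mul_map_inv {M N F : Type*} [Monoid M] [Monoid N] [FunLike F M N]
    [MonoidHomClass F M N] (φ : F) (e : Mˣ) : φ e * φ ↑e⁻¹ = 1 := by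
  rw [← map_mul, Units.mul_inv, map_one]

variable {R : Type*} [CommRing R]

/-- The unit `x + y` of the coordinate ring of the hyperbola `y² = x² - e`, where
`(x + y) (x - y) = e`. -/
noncomputable def hyperbolaUnit (e : Rˣ) : (AdjoinSqrt (X ^ 2 - C (e : R)))ˣ :=
  .mkOfMulEqOne (.of _ X + .root _) (.of _ (C ↑e⁻¹) * (.of _ X - .root _)) <| by
    have hy : AdjoinRoot.root (X ^ 2 - C (X ^ 2 - C (e : R))) ^ 2 =
        .of _ X ^ 2 - .of _ (C (e : R)) :=
      (AdjoinSqrt.root_sq _).trans (by rw [map_sub (AdjoinRoot.of _), map_pow (AdjoinRoot.of _)])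
    have he := map_units_mul_map_inv ((AdjoinRoot.of (X ^ 2 - C (X ^ 2 - C (e : R)))).comp C) e
    rw [RingHom.comp_apply, RingHom.comp_apply] at he
    linear_combination he - AdjoinRoot.of (X ^ 2 - C (X ^ 2 - C (e : R))) (C ↑e⁻¹) * hy

/-- The map `R[T;T⁻¹] → R[x, y]`, `T ↦ x + y`, to the coordinate ring of the hyperbola
`y² = x² - e`. -/
noncomputable def laurentToHyperbola (e : Rˣ) : R[T;T⁻¹] →+* AdjoinSqrt (X ^ 2 - C (e : R)) :=
  LaurentPolynomial.eval₂ ((AdjoinRoot.of _).comp C) (hyperbolaUnit e)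

lemma laurentToHyperbola_C (e : Rˣ) (r : R) :
    laurentToHyperbola e (.C r) = .of _ (C r) :=
  LaurentPolynomial.eval₂_C _ _ r

lemma laurentToHyperbola_T_one (e : Rˣ) :
    laurentToHyperbola e (T 1) = .of _ X + .root _ :=
  (eval₂_T_n _ _ 1).trans (pow_one _)

lemma laurentToHyperbola_T_neg_one (e : Rˣ) :
    laurentToHyperbola e (T (-1)) = .of _ (C ↑e⁻¹) * (.of _ X - .root _) :=
  (eval₂_T _ _ (-1)).trans (by rw [zpow_neg_one]; rfl)

lemma laurentToHyperbola_C_mul_T_neg_one (e : Rˣ) :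
    laurentToHyperbola e (.C (e : R) * T (-1)) = .of _ X - .root _ := by
  have he := map_units_mul_map_inv ((AdjoinRoot.of (X ^ 2 - C (X ^ 2 - C (e : R)))).comp C) e
  rw [map_mul, laurentToHyperbola_C, laurentToHyperbola_T_neg_one, ← mul_assoc]
  exact (congrArg (· * _) he).trans (one_mul _)

variable [Invertible (2 : R)]

/-- The parametrization `x ↦ (T + e T⁻¹) / 2`, `y ↦ (T - e T⁻¹) / 2` of the hyperbola
`y² = x² - e`, on coordinate rings. -/
noncomputable def hyperbolaToLaurent (e : R) : AdjoinSqrt (X ^ 2 - C e) →+* R[T;T⁻¹] :=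
  AdjoinRoot.lift
    (eval₂RingHom LaurentPolynomial.C (.C ⅟2 * (T 1 + .C e * T (-1))))
    (.C ⅟2 * (T 1 - .C e * T (-1))) <| by
    have h2 := two_mul_map_invOf_two (LaurentPolynomial.C (R := R))
    have hT : (T 1 * T (-1) : R[T;T⁻¹]) = 1 := by rw [← T_add, add_neg_cancel, T_zero]
    have hy : (.C ⅟2 * (T 1 - .C e * T (-1)) : R[T;T⁻¹]) ^ 2 =
        (.C ⅟2 * (T 1 + .C e * T (-1))) ^ 2 - .C e := by
      linear_combination (-4 * .C ⅟2 ^ 2 * .C e) * hT - (2 * .C ⅟2 + 1) * .C e * h2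
    rw [eval₂_sub, eval₂_pow, eval₂_X, eval₂_C, coe_eval₂RingHom, eval₂_sub, eval₂_pow, eval₂_X,
      eval₂_C, hy, sub_self]

lemma hyperbolaToLaurent_of_C (e r : R) : hyperbolaToLaurent e (.of _ (C r)) = .C r :=
  (AdjoinRoot.lift_of _).trans (eval₂_C _ _)

lemma hyperbolaToLaurent_of_X (e : R) :
    hyperbolaToLaurent e (.of _ X) = .C ⅟2 * (T 1 + .C e * T (-1)) :=
  (AdjoinRoot.lift_of _).trans (eval₂_X _ _)

lemma hyperbolaToLaurent_root (e : R) :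
    hyperbolaToLaurent e (.root _) = .C ⅟2 * (T 1 - .C e * T (-1)) :=
  AdjoinRoot.lift_root _

lemma hyperbolaToLaurent_comp_laurentToHyperbola (e : Rˣ) :
    (hyperbolaToLaurent (e : R)).comp (laurentToHyperbola e) = RingHom.id _ := by
  refine laurentPolynomial_ringHom_ext (fun r => ?_) ?_
  · rw [RingHom.comp_apply, laurentToHyperbola_C, hyperbolaToLaurent_of_C, RingHom.id_apply]
  · rw [RingHom.comp_apply, laurentToHyperbola_T_one, map_add, hyperbolaToLaurent_of_X,
      hyperbolaToLaurent_root, RingHom.id_apply]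
    linear_combination T 1 * two_mul_map_invOf_two (LaurentPolynomial.C (R := R))

lemma laurentToHyperbola_comp_hyperbolaToLaurent (e : Rˣ) :
    (laurentToHyperbola e).comp (hyperbolaToLaurent (e : R)) = RingHom.id _ := by
  have h2 := two_mul_map_invOf_two ((laurentToHyperbola e).comp LaurentPolynomial.C)
  rw [RingHom.comp_apply] at h2
  refine AdjoinRoot.ringHom_ext (Polynomial.ringHom_ext (fun r => ?_) ?_) ?_
  · rw [RingHom.comp_apply, RingHom.comp_apply, hyperbolaToLaurent_of_C, laurentToHyperbola_C]
    rfl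
  · rw [RingHom.comp_apply, RingHom.comp_apply, hyperbolaToLaurent_of_X, map_mul, map_add,
      laurentToHyperbola_T_one, laurentToHyperbola_C_mul_T_neg_one, RingHom.comp_apply,
      RingHom.id_apply]
    linear_combination AdjoinRoot.of _ X * h2
  · rw [RingHom.comp_apply, hyperbolaToLaurent_root, map_mul, map_sub (laurentToHyperbola e),
      laurentToHyperbola_T_one, laurentToHyperbola_C_mul_T_neg_one, RingHom.id_apply]
    linear_combination AdjoinRoot.root _ * h2

/-- The coordinate ring of the hyperbola `y² = x² - e` is a Laurent polynomial ring in `x + y`. -/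
noncomputable def hyperbolaEquivLaurent (e : Rˣ) :
    AdjoinSqrt (X ^ 2 - C (e : R)) ≃+* R[T;T⁻¹] :=
  .ofRingHom (hyperbolaToLaurent (e : R)) (laurentToHyperbola e)
    (hyperbolaToLaurent_comp_laurentToHyperbola e) (laurentToHyperbola_comp_hyperbolaToLaurent e)

end Hyperbola

/-- The isomorphism `R[X][√g] ≃ R[X][√(g(cX + d))]` given by the substitution `X ↦ cX + d`. -/
noncomputable def adjoinSqrtCompLinearEquiv {R : Type*} [CommRing R] (c d : R) [Invertible c]
    (g : R[X]) : AdjoinSqrt g ≃+* AdjoinSqrt (g.comp (C c * X + C d)) :=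
  (AdjoinRoot.mapAlgEquiv (algEquivCMulXAddC c d) _ _
    (.of_eq (by simp [comp_eq_aeval]))).toRingEquiv

lemma unitSumNumberOmega_adjoinSqrt_sq_sub_C {K : Type*} [Field K] (h2 : (2 : K) ≠ 0) {c e : K}
    (hc : c ≠ 0) (he : e ≠ 0) (d : K) :
    UnitSumNumberOmega (AdjoinSqrt ((C c * X + C d) ^ 2 - C e)) := by
  let := invertibleOfNonzero h2
  let := invertibleOfNonzero hc
  have h := ((unitSumNumberOmega_laurentPolynomial K).of_ringEquiv
    (hyperbolaEquivLaurent (Units.mk0 e he)).symm).of_ringEquiv (adjoinSqrtCompLinearEquiv c d _)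
  rwa [sub_comp, pow_comp, X_comp, C_comp] at h

section QuadraticAlgebra

variable {A : Type*} [CommRing A] {f : A}

/-- The identification of `A[√f]` with Mathlib's quadratic algebra, `√f` being `ω`; it provides the
coordinates `re + im · √f`, the conjugation `star` and the norm. -/
noncomputable def adjoinSqrtEquivQuadraticAlgebra (f : A) :
    AdjoinSqrt f ≃ₐ[A] QuadraticAlgebra A f 0 :=
  .ofAlgHom
    (AdjoinRoot.liftAlgHom _ (Algebra.ofId _ _) .omega (by
      rw [eval₂_sub, eval₂_pow, eval₂_X, eval₂_C, sq, QuadraticAlgebra.omega_mul_omega_eq_mk]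
      exact sub_self _))
    (QuadraticAlgebra.lift ⟨.root _, by
      rw [← sq, AdjoinSqrt.root_sq, zero_smul, add_zero, Algebra.smul_def, mul_one]; rfl⟩)
    (by ext <;> simp)
    (by ext; simp)

lemma norm_eq_re_sq_sub_mul_im_sq (z : QuadraticAlgebra A f 0) :
    z.norm = z.re ^ 2 - f * z.im ^ 2 := by
  rw [QuadraticAlgebra.norm_def]
  ring

lemma re_mul_mul_re_mul_star (u v : QuadraticAlgebra A f 0) :
    (v * u).re * (v * star u).re =
      u.norm * v.re ^ 2 + v.norm * u.re ^ 2 - u.norm * v.norm := by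
  simp only [QuadraticAlgebra.re_mul, QuadraticAlgebra.re_star, QuadraticAlgebra.im_star,
    norm_eq_re_sq_sub_mul_im_sq]
  ring

lemma re_mul_add_re_mul_star (u v : QuadraticAlgebra A f 0) :
    (v * u).re + (v * star u).re = 2 * (v.re * u.re) := by
  simp only [QuadraticAlgebra.re_mul, QuadraticAlgebra.re_star, QuadraticAlgebra.im_star]
  ring

/-- The subalgebra `S ⊕ S · b√f` of `A[√f]` attached to a subalgebra `S` of `A` with
`(b√f)² ∈ S`. -/
def quadraticSubalgebra {R : Type*} [CommRing R] [Algebra R A] (S : Subalgebra R A) (b : A)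
    (hb : f * b ^ 2 ∈ S) : Subalgebra R (QuadraticAlgebra A f 0) where
  carrier := {z | z.re ∈ S ∧ ∃ q ∈ S, z.im = q * b}
  add_mem' := by
    rintro z w ⟨hz, p, hp, hzp⟩ ⟨hw, q, hq, hwq⟩
    exact ⟨add_mem hz hw, p + q, add_mem hp hq, by simp [hzp, hwq, add_mul]⟩
  mul_mem' := by
    rintro z w ⟨hz, p, hp, hzp⟩ ⟨hw, q, hq, hwq⟩
    refine ⟨?_, z.re * q + p * w.re, add_mem (mul_mem hz hq) (mul_mem hp hw), ?_⟩
    · have hre : (z * w).re = z.re * w.re + f * b ^ 2 * (p * q) := by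
        rw [QuadraticAlgebra.re_mul, hzp, hwq]
        ring
      rw [hre]
      exact add_mem (mul_mem hz hw) (mul_mem hb (mul_mem hp hq))
    · rw [QuadraticAlgebra.im_mul, hzp, hwq]
      ring
  algebraMap_mem' r := ⟨S.algebraMap_mem r, 0, zero_mem S, (zero_mul b).symm⟩

lemma exists_isUnit_im_ne_zero [Nontrivial A]
    (h : AddSubmonoid.closure {z : QuadraticAlgebra A f 0 | IsUnit z} = ⊤) :
    ∃ u : QuadraticAlgebra A f 0, IsUnit u ∧ u.im ≠ 0 := by
  by_contra! hcon
  have hker : (⊤ : AddSubmonoid (QuadraticAlgebra A f 0)) ≤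
      (QuadraticAlgebra.imₗ (a := f) (b := 0)).ker.toAddSubmonoid :=
    h ▸ AddSubmonoid.closure_le.2 hcon
  exact one_ne_zero (hker (x := .omega) trivial)

end QuadraticAlgebra

section Pell

variable {R : Type*} [CommRing R] [IsDomain R] {f : R[X]} {u v : QuadraticAlgebra R[X] f 0}

lemma exists_isUnit_norm_eq_C (hu : IsUnit u) : ∃ n : R, IsUnit n ∧ u.norm = C n := by
  obtain ⟨n, hn, hu⟩ := Polynomial.isUnit_iff.1 (QuadraticAlgebra.isUnit_iff_norm_isUnit.1 hu)
  exact ⟨n, hn, hu.symm⟩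

lemma two_mul_natDegree_re_of_isUnit (hf : f ≠ 0) (hu : IsUnit u) (him : u.im ≠ 0) :
    2 * u.re.natDegree = f.natDegree + 2 * u.im.natDegree := by
  obtain ⟨n, -, hn⟩ := exists_isUnit_norm_eq_C hu
  have hre : u.re ^ 2 = f * u.im ^ 2 + C n := by rw [← hn, norm_eq_re_sq_sub_mul_im_sq]; ring
  rw [← natDegree_pow, hre, natDegree_add_C, natDegree_mul hf (pow_ne_zero 2 him), natDegree_pow]

lemma natDegree_re_eq_zero_of_isUnit (hu : IsUnit u) (him : u.im = 0) : u.re.natDegree = 0 := by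
  obtain ⟨n, -, hn⟩ := exists_isUnit_norm_eq_C hu
  simpa [norm_eq_re_sq_sub_mul_im_sq, him] using congrArg natDegree hn

lemma natDegree_re_mul_lt_or_mul_star_lt (h2 : (2 : R) ≠ 0) (hu : IsUnit u) (hv : IsUnit v)
    (hpos : 0 < u.re.natDegree) (hle : u.re.natDegree ≤ v.re.natDegree) :
    (v * u).re.natDegree < v.re.natDegree ∨ (v * star u).re.natDegree < v.re.natDegree := by
  -- `(v * u).re` and `(v * star u).re` have sum `2 * v.re * u.re` and a product of degree at most
  -- `2 * deg v.re`, so one of them has degree at least `deg v.re + deg u.re` and the other drops.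
  obtain ⟨m, -, hm⟩ := exists_isUnit_norm_eq_C hu
  obtain ⟨n, -, hn⟩ := exists_isUnit_norm_eq_C hv
  have hsum : v.re.natDegree + u.re.natDegree ≤
      max (v * u).re.natDegree (v * star u).re.natDegree := by
    have hu0 : u.re ≠ 0 := ne_zero_of_natDegree_gt hpos
    have hv0 : v.re ≠ 0 := ne_zero_of_natDegree_gt (hpos.trans_le hle)
    rw [← natDegree_mul hv0 hu0, ← natDegree_C_mul h2, C_ofNat, ← re_mul_add_re_mul_star]
    exact natDegree_add_le _ _
  have hprod : ((v * u).re * (v * star u).re).natDegree ≤ 2 * v.re.natDegree := by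
    rw [re_mul_mul_re_mul_star, hm, hn]
    compute_degree
    omega
  by_contra! h
  have h0 : (v * u).re ≠ 0 := ne_zero_of_natDegree_gt (hpos.trans_le (hle.trans h.1))
  have h0' : (v * star u).re ≠ 0 := ne_zero_of_natDegree_gt (hpos.trans_le (hle.trans h.2))
  rw [natDegree_mul h0 h0'] at hprod
  omega

lemma mem_of_mul_mem_of_isUnit {S : Subalgebra R (QuadraticAlgebra R[X] f 0)}
    (hu : IsUnit u) (hu' : star u ∈ S) (hvu : v * u ∈ S) : v ∈ S := by
  obtain ⟨n, hn, hun⟩ := exists_isUnit_norm_eq_C hu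
  have h : v * u * star u = n • v := by
    rw [mul_assoc, ← QuadraticAlgebra.algebraMap_norm_eq_mul_star, hun, mul_comm,
      ← Algebra.smul_def]
    ext <;> simp [smul_eq_C_mul]
  have hmem := S.smul_mem (mul_mem hvu hu') (↑hn.unit⁻¹)
  rwa [h, smul_smul, IsUnit.val_inv_mul, one_smul] at hmem

theorem mem_of_isUnit_of_minimal (h2 : (2 : R) ≠ 0) {S : Subalgebra R (QuadraticAlgebra R[X] f 0)}
    (hu : IsUnit u) (huS : u ∈ S) (huS' : star u ∈ S) (hpos : 0 < u.re.natDegree)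
    (hmin : ∀ w : QuadraticAlgebra R[X] f 0, IsUnit w → w.im ≠ 0 →
      u.re.natDegree ≤ w.re.natDegree)
    (hv : IsUnit v) : v ∈ S := by
  induction hd : v.re.natDegree using Nat.strong_induction_on generalizing v with
  | _ d ih =>
    subst hd
    by_cases him : v.im = 0
    · have hvC : v = algebraMap R _ (v.re.coeff 0) := by
        ext1
        · exact eq_C_of_natDegree_eq_zero (natDegree_re_eq_zero_of_isUnit hv him)
        · exact him
      rw [hvC]
      exact S.algebraMap_mem _
    · rcases natDegree_re_mul_lt_or_mul_star_lt h2 hu hv hpos (hmin v hv him) with hlt | hlt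
      · exact mem_of_mul_mem_of_isUnit hu huS' (ih _ hlt (hv.mul hu) rfl)
      · exact mem_of_mul_mem_of_isUnit hu.star (by rwa [star_star]) (ih _ hlt (hv.mul hu.star) rfl)

lemma natDegree_eq_one_of_X_mem_adjoin {a : R[X]} (h : X ∈ Algebra.adjoin R {a}) :
    a.natDegree = 1 := by
  rw [Algebra.adjoin_singleton_eq_range_aeval] at h
  obtain ⟨p, hp : p.comp a = X⟩ := h
  have hdeg : p.natDegree * a.natDegree = 1 := by rw [← natDegree_comp, hp, natDegree_X]
  exact Nat.eq_one_of_mul_eq_one_left hdeg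

theorem exists_isUnit_natDegree_re_eq_one (h2 : (2 : R) ≠ 0) (hf : 0 < f.natDegree)
    (h : AddSubmonoid.closure {z : QuadraticAlgebra R[X] f 0 | IsUnit z} = ⊤) :
    ∃ u : QuadraticAlgebra R[X] f 0, IsUnit u ∧ u.re.natDegree = 1 ∧ IsUnit u.im := by
  obtain ⟨u, ⟨hu, him⟩, hmin⟩ := exists_minimalFor_of_wellFoundedLT
    (fun u : QuadraticAlgebra R[X] f 0 => IsUnit u ∧ u.im ≠ 0) (fun u => u.re.natDegree)
    (exists_isUnit_im_ne_zero h)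
  obtain ⟨n, -, hn⟩ := exists_isUnit_norm_eq_C hu
  have hpos : 0 < u.re.natDegree := by
    have := two_mul_natDegree_re_of_isUnit (ne_zero_of_natDegree_gt hf) hu him
    omega
  have ha : u.re ∈ Algebra.adjoin R {u.re} := Algebra.self_mem_adjoin_singleton R u.re
  have hb : f * u.im ^ 2 ∈ Algebra.adjoin R {u.re} := by
    have hnorm : f * u.im ^ 2 = u.re ^ 2 - C n := by
      rw [← hn, norm_eq_re_sq_sub_mul_im_sq, sub_sub_cancel]
    rw [hnorm]
    exact sub_mem (pow_mem ha 2) (Subalgebra.algebraMap_mem _ n)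
  let S := quadraticSubalgebra (Algebra.adjoin R {u.re}) u.im hb
  have huS : u ∈ S := ⟨ha, 1, one_mem _, (one_mul _).symm⟩
  have huS' : star u ∈ S := ⟨by simp, -1, neg_mem (one_mem _), by simp⟩
  have hS (z : QuadraticAlgebra R[X] f 0) : z ∈ S := by
    have hle : AddSubmonoid.closure {z | IsUnit z} ≤ S.toSubsemiring.toAddSubmonoid :=
      AddSubmonoid.closure_le.2 fun v hv => mem_of_isUnit_of_minimal h2 hu huS huS' hpos
        (fun w hw hw' => le_of_not_gt fun hlt => (hmin ⟨hw, hw'⟩ hlt.le).not_gt hlt) hv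
    exact hle (h ▸ trivial)
  obtain ⟨q, -, hq⟩ := (hS .omega).2
  exact ⟨u, hu, natDegree_eq_one_of_X_mem_adjoin (hS (algebraMap R[X] _ X)).1,
    .of_mul_eq_one_right q hq.symm⟩

end Pell

section Field

variable {K : Type*} [Field K] {f : K[X]}

lemma exists_eq_sq_sub_C (h2 : (2 : K) ≠ 0) (hf : 0 < f.natDegree)
    (h : AddSubmonoid.closure {z : QuadraticAlgebra K[X] f 0 | IsUnit z} = ⊤) :
    ∃ c d e : K, c ≠ 0 ∧ e ≠ 0 ∧ f = (C c * X + C d) ^ 2 - C e := by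
  obtain ⟨u, hu, hre, him⟩ := exists_isUnit_natDegree_re_eq_one h2 hf h
  obtain ⟨n, hn, hnorm⟩ := exists_isUnit_norm_eq_C hu
  obtain ⟨b, hb, hub⟩ := Polynomial.isUnit_iff.1 him
  have hb' : C b⁻¹ * C b = 1 := by rw [← C_mul, inv_mul_cancel₀ hb.ne_zero, C_1]
  have hre' := eq_X_add_C_of_natDegree_le_one hre.le
  have hc : u.re.coeff 1 ≠ 0 := by
    rw [← hre]
    exact leadingCoeff_ne_zero.2 (ne_zero_of_natDegree_gt (hre ▸ one_pos))
  refine ⟨b⁻¹ * u.re.coeff 1, b⁻¹ * u.re.coeff 0, b⁻¹ ^ 2 * n, ?_, ?_, ?_⟩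
  · exact mul_ne_zero (inv_ne_zero hb.ne_zero) hc
  · exact mul_ne_zero (pow_ne_zero 2 (inv_ne_zero hb.ne_zero)) hn.ne_zero
  · rw [norm_eq_re_sq_sub_mul_im_sq, ← hub] at hnorm
    calc f = (C b⁻¹ * u.re) ^ 2 - C b⁻¹ ^ 2 * C n := by
          rw [← hnorm]
          linear_combination (-(C b⁻¹ * C b) - 1) * f * hb'
      _ = _ := by
          conv_lhs => rw [hre']
          simp only [C_mul, C_pow]
          ring

lemma natDegree_sq_sub_C {R : Type*} [CommRing R] [NoZeroDivisors R] {c : R} (hc : c ≠ 0)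
    (d e : R) : ((C c * X + C d) ^ 2 - C e).natDegree = 2 := by
  rw [natDegree_sub_C, natDegree_pow, natDegree_linear hc]

lemma leadingCoeff_sq_sub_C {R : Type*} [CommRing R] [IsDomain R] {c : R} (hc : c ≠ 0)
    (d e : R) : ((C c * X + C d) ^ 2 - C e).leadingCoeff = c ^ 2 := by
  have hdeg : (C e).degree < ((C c * X + C d) ^ 2).degree := by
    rw [degree_pow, degree_linear hc]
    exact degree_C_le.trans_lt (by decide)
  rw [leadingCoeff_sub_of_degree_lt hdeg, leadingCoeff_pow, leadingCoeff_linear hc]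

lemma squarefree_sq_sub_C (h2 : (2 : K) ≠ 0) {c e : K} (hc : c ≠ 0) (he : e ≠ 0) (d : K) :
    Squarefree ((C c * X + C d) ^ 2 - C e) := by
  refine Separable.squarefree ⟨-C e⁻¹, C (e⁻¹ * (2 * c)⁻¹) * (C c * X + C d), ?_⟩
  have he' : C e⁻¹ * C e = 1 := by rw [← C_mul, inv_mul_cancel₀ he, C_1]
  have hc' : C (2 * c)⁻¹ * (2 * C c) = 1 := by
    rw [← C_ofNat, ← C_mul, ← C_mul, inv_mul_cancel₀ (mul_ne_zero h2 hc), C_1]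
  have hder : derivative ((C c * X + C d) ^ 2 - C e) = 2 * C c * (C c * X + C d) := by
    simp only [derivative_sub, derivative_C, derivative_sq, derivative_add, derivative_C_mul,
      derivative_X, C_ofNat]
    ring
  rw [hder, C_mul]
  linear_combination he' + C e⁻¹ * (C c * X + C d) ^ 2 * hc'

lemma exists_eq_sq_sub_C_of_squarefree (h2 : (2 : K) ≠ 0) {c : K} (hsf : Squarefree f)
    (hdeg : f.natDegree = 2) (hc : f.leadingCoeff = c ^ 2) :
    ∃ c d e : K, c ≠ 0 ∧ e ≠ 0 ∧ f = (C c * X + C d) ^ 2 - C e := by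
  have hc0 : c ≠ 0 := by
    rintro rfl
    rw [zero_pow two_ne_zero, leadingCoeff_eq_zero] at hc
    exact hsf.ne_zero hc
  obtain ⟨d, hd⟩ : ∃ d : K, 2 * c * d = f.coeff 1 :=
    ⟨f.coeff 1 / (2 * c), mul_div_cancel₀ _ (mul_ne_zero h2 hc0)⟩
  have hf : f = (C c * X + C d) ^ 2 - C (d ^ 2 - f.coeff 0) := by
    rw [leadingCoeff, hdeg] at hc
    conv_lhs => rw [eq_quadratic_of_degree_le_two (natDegree_le_iff_degree_le.1 hdeg.le), hc, ← hd]
    simp only [C_mul, C_pow, C_sub, C_ofNat]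
    ring
  refine ⟨c, d, _, hc0, fun he => ?_, hf⟩
  rw [he, C_0, sub_zero, sq] at hf
  have hunit := hsf _ (Dvd.intro_left 1 (by rw [one_mul, ← hf]))
  exact one_ne_zero ((natDegree_linear hc0).symm.trans (natDegree_eq_zero_of_isUnit hunit))

end Field

theorem unit_sum_number_quadratic_odd_char_general (K : Type*) [Field K] (hchar : ringChar K ≠ 2)
    (f : K[X]) (hf : 0 < f.natDegree) :
    UnitSumNumberOmega (AdjoinSqrt f) ↔
      Squarefree f ∧ f.natDegree = 2 ∧ ∃ c : K, f.leadingCoeff = c ^ 2 := by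
  have h2 : (2 : K) ≠ 0 := Ring.two_ne_zero hchar
  constructor
  · intro h
    obtain ⟨c, d, e, hc, he, rfl⟩ := exists_eq_sq_sub_C h2 hf
      (h.of_ringEquiv (adjoinSqrtEquivQuadraticAlgebra f).toRingEquiv).closure_isUnit_eq_top
    exact ⟨squarefree_sq_sub_C h2 hc he d, natDegree_sq_sub_C hc d e, c,
      leadingCoeff_sq_sub_C hc d e⟩
  · rintro ⟨hsf, hdeg, c, hlead⟩
    obtain ⟨c, d, e, hc, he, rfl⟩ := exists_eq_sq_sub_C_of_squarefree h2 hsf hdeg hlead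
    exact unitSumNumberOmega_adjoinSqrt_sq_sub_C h2 hc he d

/-- For a finite field `K` of odd characteristic and a nonconstant squarefree `f ∈ K[X]`,
the ring `R = K[X,Y]/(Y² - f(X))` has unit sum number `ω` if and only if `f` has degree `2`
and its leading coefficient is a square in `K`. -/
theorem unit_sum_number_quadratic_odd_char
    (K : Type*) [Field K] [Finite K] (hodd : Odd (ringChar K))
    (f : Polynomial K) (hf : 0 < f.natDegree) (hsf : Squarefree f) :
    UnitSumNumberOmega
        (AdjoinRoot ((Polynomial.X : Polynomial (Polynomial K)) ^ 2 - Polynomial.C f)) ↔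
      f.natDegree = 2 ∧ ∃ c : K, f.leadingCoeff = c ^ 2 := by
  have hchar : ringChar K ≠ 2 := fun h => absurd (h ▸ hodd) (by decide)
  exact (unit_sum_number_quadratic_odd_char_general K hchar f hf).trans (and_iff_right hsf)
end
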